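/- Let k ≥ 2 be an integer and A ⊆ F_p a finite set satisfying |A||(k-1)A||AA| ≤ p². Then T_k(A) ≲ |A|^{k-3/2} T_{k-1}(A)^{1/2} |AA|^{3/2} + |A|^{2k-3}|AA| + T_{k-1}(A)|AA|²/|A|, where T_k(A) counts solutions of a_1+...+a_k = a_{k+1}+...+a_{2k} with a_i ∈ A, and ≲ hides absolute constants and logarithmic factors. -/

import Mathlib

open Pointwise

namespace RudnevAux

open MvPolynomial

/-- The resultant of a prime `f` of positive degree and `g` not divisible by `f` is nonzero. -/
theorem resultant_ne_zero_of_prime {R : Type*} [CommRing R] [IsDomain R]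
    (f g : Polynomial R) (hf : Prime f) (hfg : ¬ f ∣ g) :
    Polynomial.resultant f g ≠ 0 := by
  intro h0
  set m := f.natDegree with hm
  set n := g.natDegree with hn
  let b₁ := ((Polynomial.degreeLT.basis R m).prod (Polynomial.degreeLT.basis R n)).reindex
    finSumFinEquiv
  let b₂ := Polynomial.degreeLT.basis R (m + n)
  have hM := Polynomial.toMatrix_sylvesterMap' f g (le_refl m) (le_refl n)
  have hdet : (Polynomial.sylvester f g m n).det = 0 := h0
  obtain ⟨v, hv, hMv⟩ := Matrix.exists_mulVec_eq_zero_iff.mpr hdet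
  let x := b₁.equivFun.symm v
  have hx : x ≠ 0 := by
    intro h
    apply hv
    have : b₁.equivFun x = v := b₁.equivFun.apply_symm_apply v
    rw [← this, h]; simp
  have hx0 : Polynomial.sylvesterMap f g (le_refl m) (le_refl n) x = 0 := by
    apply b₂.equivFun.injective
    rw [map_zero]
    have h1 := LinearMap.toMatrix_mulVec_repr b₁ b₂
      (Polynomial.sylvesterMap f g (le_refl m) (le_refl n)) x
    rw [hM] at h1
    have h2 : ⇑(b₁.repr x) = v := by
      have : b₁.equivFun x = v := b₁.equivFun.apply_symm_apply v
      simpa using this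
    rw [h2, hMv] at h1
    ext i
    have := congrFun h1 i
    simpa using this.symm
  have h3 : f * x.2.1 + g * x.1.1 = 0 := by
    have := congrArg Subtype.val hx0
    simpa using this
  have h4 : f ∣ g * x.1.1 := by
    have : g * x.1.1 = f * (- x.2.1) := by linear_combination h3
    rw [this]; exact dvd_mul_right _ _
  have h5 : x.1.1 = 0 := by
    rcases hf.dvd_or_dvd h4 with h | h
    · exact absurd h hfg
    · by_contra hne
      have hdeg := Polynomial.mem_degreeLT.mp x.1.2
      have := Polynomial.degree_le_of_dvd h hne
      rw [Polynomial.degree_eq_natDegree hf.ne_zero] at this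
      exact absurd (lt_of_le_of_lt this hdeg) (lt_irrefl _)
  rw [h5, mul_zero, add_zero] at h3
  have h6 : x.2.1 = 0 := by
    rcases mul_eq_zero.mp h3 with h | h
    · exact absurd h hf.ne_zero
    · exact h
  apply hx
  ext1
  · exact Subtype.ext h5
  · exact Subtype.ext h6

theorem totalDegree_det_le {K : Type*} [Field K] {s N : ℕ} {σ : Type*}
    (M : Matrix (Fin s) (Fin s) (MvPolynomial σ K))
    (h : ∀ i j, (M i j).totalDegree ≤ N) : M.det.totalDegree ≤ s * N := by
  rw [Matrix.det_apply]
  refine totalDegree_finsetSum_le (fun τ _ => ?_)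
  have h1 : (∏ i, M (τ i) i).totalDegree ≤ s * N := by
    refine (totalDegree_finsetProd _ _).trans ?_
    refine (Finset.sum_le_sum (fun i _ => h (τ i) i)).trans ?_
    simp
  rcases Int.units_eq_one_or (Equiv.Perm.sign τ) with h2 | h2
  · rw [h2]; simpa using h1
  · rw [h2]; simpa using h1

theorem totalDegree_coeff_le {K : Type*} [Field K] {n : ℕ} (f : MvPolynomial (Fin (n+1)) K)
    (i : ℕ) : ((finSuccEquiv K n f).coeff i).totalDegree ≤ f.totalDegree := by
  by_cases h : (finSuccEquiv K n f).coeff i = 0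
  · rw [h]; simp
  · have := totalDegree_coeff_finSuccEquiv_add_le f i h
    omega

theorem finSuccEquiv_symm_C {K : Type*} [Field K] {n : ℕ} (r : MvPolynomial (Fin n) K) :
    (finSuccEquiv K n).symm (Polynomial.C r) = rename Fin.succ r := by
  rw [AlgEquiv.symm_apply_eq]
  induction r using MvPolynomial.induction_on with
  | C a => simp [finSuccEquiv_apply]
  | add p q hp hq => simp only [map_add, hp, hq]
  | mul_X p i hp => simp only [map_mul, hp, rename_X, finSuccEquiv_X_succ]

/-- Elimination. -/
theorem exists_elim {K : Type*} [Field K] {d : ℕ} (f g : MvPolynomial (Fin 3) K)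
    (hf : Irreducible f) (hd : f.totalDegree ≤ d) (hg : g.totalDegree ≤ 3 * d)
    (hY : f.degreeOf 0 ≠ 0) (hfg : ¬ f ∣ g) :
    ∃ (r : MvPolynomial (Fin 2) K) (a b : MvPolynomial (Fin 3) K), r ≠ 0 ∧
      r.totalDegree ≤ 12 * d ^ 2 ∧ f * a + g * b = rename Fin.succ r := by
  set e := finSuccEquiv K 2
  have hp : Prime (e f) := (MulEquiv.prime_iff e.toMulEquiv).mpr hf.prime
  have hnd : ¬ e f ∣ e g := by
    intro h
    apply hfg
    have := map_dvd e.symm h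
    simpa using this
  have hfd : (e f).natDegree = f.degreeOf 0 := natDegree_finSuccEquiv f
  have hgd : (e g).natDegree = g.degreeOf 0 := natDegree_finSuccEquiv g
  obtain ⟨a, b, -, -, hab⟩ := Polynomial.exists_mul_add_mul_eq_C_resultant (e f) (e g)
    le_rfl le_rfl (Or.inl (by rw [hfd]; exact hY))
  refine ⟨Polynomial.resultant (e f) (e g), e.symm a, e.symm b,
    resultant_ne_zero_of_prime _ _ hp hnd, ?_, ?_⟩
  · have h1 : (Polynomial.resultant (e f) (e g)).totalDegree
        ≤ ((e f).natDegree + (e g).natDegree) * (3 * d) := by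
      refine totalDegree_det_le _ (fun i j => ?_)
      unfold Polynomial.sylvester
      simp only [Matrix.of_apply]
      refine Fin.addCases (fun j₁ => ?_) (fun j₁ => ?_) j
      · rw [Fin.addCases_left]
        split_ifs
        · exact (totalDegree_coeff_le _ _).trans hg
        · simp
      · rw [Fin.addCases_right]
        split_ifs
        · exact (totalDegree_coeff_le _ _).trans (hd.trans (by omega))
        · simp
    refine h1.trans ?_
    have h2 : (e f).natDegree ≤ d := by
      rw [hfd]; exact (degreeOf_le_totalDegree _ _).trans hd
    have h3 : (e g).natDegree ≤ 3 * d := by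
      rw [hgd]; exact (degreeOf_le_totalDegree _ _).trans hg
    nlinarith
  · have := congrArg e.symm hab
    rw [finSuccEquiv_symm_C] at this
    simpa using this

end RudnevAux


namespace RudnevAux

open MvPolynomial

/-- Restriction to a line `U = u, Y = c V + s`. Variables: `0 = Y`, `1 = U`, `2 = V`. -/
noncomputable def rL {K : Type*} [Field K] (l : K × K × K) :
    MvPolynomial (Fin 3) K →ₐ[K] Polynomial K :=
  aeval ![Polynomial.C l.2.1 * Polynomial.X + Polynomial.C l.2.2, Polynomial.C l.1, Polynomial.X]

/-- Restriction to a line `V = v, Y = c U + s`. -/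
noncomputable def rM {K : Type*} [Field K] (l : K × K × K) :
    MvPolynomial (Fin 3) K →ₐ[K] Polynomial K :=
  aeval ![Polynomial.C l.2.1 * Polynomial.X + Polynomial.C l.2.2, Polynomial.X, Polynomial.C l.1]

variable {K : Type*} [Field K]

theorem natDegree_rL (l : K × K × K) (f : MvPolynomial (Fin 3) K) :
    (rL l f).natDegree ≤ f.totalDegree := by
  have := aeval_natDegree_le (n := 1) f le_rfl ![Polynomial.C l.2.1 * Polynomial.X +
    Polynomial.C l.2.2, Polynomial.C l.1, Polynomial.X] (by
      intro i
      fin_cases i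
      · exact Polynomial.natDegree_linear_le
      · simp
      · simp)
  simpa [rL] using this

theorem natDegree_rM (l : K × K × K) (f : MvPolynomial (Fin 3) K) :
    (rM l f).natDegree ≤ f.totalDegree := by
  have := aeval_natDegree_le (n := 1) f le_rfl ![Polynomial.C l.2.1 * Polynomial.X +
    Polynomial.C l.2.2, Polynomial.X, Polynomial.C l.1] (by
      intro i
      fin_cases i
      · exact Polynomial.natDegree_linear_le
      · simp
      · simp)
  simpa [rM] using this

theorem eval_aeval (t : K) (φ : Fin 3 → Polynomial K) (f : MvPolynomial (Fin 3) K) :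
    (aeval φ f).eval t = eval (fun i => (φ i).eval t) f := by
  induction f using MvPolynomial.induction_on with
  | C a => simp
  | add p q hp hq => simp only [map_add, Polynomial.eval_add, hp, hq]
  | mul_X p i hp => simp only [map_mul, Polynomial.eval_mul, hp, aeval_X, eval_X]

theorem eval_rL (l : K × K × K) (f : MvPolynomial (Fin 3) K) (t : K) :
    (rL l f).eval t = eval ![l.2.1 * t + l.2.2, l.1, t] f := by
  rw [rL, eval_aeval]
  congr 2
  ext i
  fin_cases i <;> simp

theorem eval_rM (l : K × K × K) (f : MvPolynomial (Fin 3) K) (t : K) :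
    (rM l f).eval t = eval ![l.2.1 * t + l.2.2, t, l.1] f := by
  rw [rM, eval_aeval]
  congr 2
  ext i
  fin_cases i <;> simp

/-- incidence -/
def inc (l m : K × K × K) : Prop := l.2.1 * m.1 + l.2.2 = m.2.1 * l.1 + m.2.2

theorem eval_of_inc {l m : K × K × K} (h : inc l m) (f : MvPolynomial (Fin 3) K) :
    (rL l f).eval m.1 = (rM m f).eval l.1 := by
  rw [eval_rL, eval_rM, h]

open Classical in
theorem card_inc_le_right {R : Finset (K × K × K)} (hR : Set.InjOn Prod.fst (R : Set (K × K × K)))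
    {f : MvPolynomial (Fin 3) K} (hf : ∀ l ∈ R, rL l f = 0) {m : K × K × K} (hm : rM m f ≠ 0) :
    (R.filter (fun l => inc l m)).card ≤ f.totalDegree := by
  have h1 : ((R.filter (fun l => inc l m)).image Prod.fst).card
      = (R.filter (fun l => inc l m)).card :=
    Finset.card_image_of_injOn (hR.mono (Finset.coe_subset.mpr (Finset.filter_subset _ _)))
  rw [← h1]
  refine le_trans (Polynomial.card_le_degree_of_subset_roots (p := rM m f) ?_) (natDegree_rM m f)
  intro x hx
  rw [Finset.mem_val, Finset.mem_image] at hx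
  obtain ⟨l, hl, rfl⟩ := hx
  rw [Finset.mem_filter] at hl
  rw [Polynomial.mem_roots hm, Polynomial.IsRoot, ← eval_of_inc hl.2, hf l hl.1]
  simp

open Classical in
theorem card_inc_le_left {G : Finset (K × K × K)} (hG : Set.InjOn Prod.fst (G : Set (K × K × K)))
    {f : MvPolynomial (Fin 3) K} (hf : ∀ m ∈ G, rM m f = 0) {l : K × K × K} (hl : rL l f ≠ 0) :
    (G.filter (fun m => inc l m)).card ≤ f.totalDegree := by
  have h1 : ((G.filter (fun m => inc l m)).image Prod.fst).card
      = (G.filter (fun m => inc l m)).card :=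
    Finset.card_image_of_injOn (hG.mono (Finset.coe_subset.mpr (Finset.filter_subset _ _)))
  rw [← h1]
  refine le_trans (Polynomial.card_le_degree_of_subset_roots (p := rL l f) ?_) (natDegree_rL l f)
  intro x hx
  rw [Finset.mem_val, Finset.mem_image] at hx
  obtain ⟨m, hm, rfl⟩ := hx
  rw [Finset.mem_filter] at hm
  rw [Polynomial.mem_roots hl, Polynomial.IsRoot, eval_of_inc hm.2, hf m hm.1]
  simp

open Classical in
theorem card_le_of_aeval (s : Finset K) (r : MvPolynomial (Fin 2) K) (hr : r ≠ 0)
    (h : ∀ u ∈ s, aeval ![Polynomial.C u, Polynomial.X] r = (0 : Polynomial K)) :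
    s.card ≤ r.totalDegree := by
  set P := finSuccEquiv K 1 r
  have hP : P ≠ 0 := by simpa [P] using hr
  have hdeg : P.natDegree ≤ r.totalDegree := by
    rw [natDegree_finSuccEquiv]; exact degreeOf_le_totalDegree _ _
  have h1 : (s.image (C : K → MvPolynomial (Fin 1) K)).card = s.card :=
    Finset.card_image_of_injective _ (C_injective _ _)
  rw [← h1]
  refine le_trans (Polynomial.card_le_degree_of_subset_roots (p := P) ?_) hdeg
  intro x hx
  rw [Finset.mem_val, Finset.mem_image] at hx
  obtain ⟨u, hu, rfl⟩ := hx
  rw [Polynomial.mem_roots hP, Polynomial.IsRoot]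
  have key : ∀ q : MvPolynomial (Fin 2) K, (finSuccEquiv K 1 q).eval (C u) =
      Polynomial.aeval (X 0 : MvPolynomial (Fin 1) K)
        (aeval ![Polynomial.C u, Polynomial.X] q : Polynomial K) := by
    intro q
    induction q using MvPolynomial.induction_on with
    | C a => simp [finSuccEquiv_apply, algebraMap_eq]
    | add p q hp hq => simp only [map_add, Polynomial.eval_add, hp, hq]
    | mul_X p i hp =>
      simp only [map_mul, Polynomial.eval_mul, hp]
      congr 1
      fin_cases i
      · simp [finSuccEquiv_X_zero, algebraMap_eq]
      · have : (X ((fun i => i) (⟨1, by omega⟩ : Fin 2)) : MvPolynomial (Fin 2) K)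
          = X (Fin.succ (0 : Fin 1)) := rfl
        rw [this, finSuccEquiv_X_succ]
        simp
  rw [key, h u hu, map_zero]

open Classical in
theorem card_le_of_rL {R : Finset (K × K × K)} (hR : Set.InjOn Prod.fst (R : Set (K × K × K)))
    (r : MvPolynomial (Fin 2) K) (hr : r ≠ 0)
    (h : ∀ l ∈ R, rL l (rename Fin.succ r) = 0) : R.card ≤ r.totalDegree := by
  rw [← Finset.card_image_of_injOn hR]
  refine card_le_of_aeval _ r hr ?_
  intro u hu
  rw [Finset.mem_image] at hu
  obtain ⟨l, hl, rfl⟩ := hu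
  have := h l hl
  rw [rL, aeval_rename] at this
  rw [← this]
  congr 2

open Classical in
theorem card_le_of_rM {R : Finset (K × K × K)} (hR : Set.InjOn Prod.fst (R : Set (K × K × K)))
    (r : MvPolynomial (Fin 2) K) (hr : r ≠ 0)
    (h : ∀ l ∈ R, rM l (rename Fin.succ r) = 0) : R.card ≤ r.totalDegree := by
  rw [← Finset.card_image_of_injOn hR]
  have hinj : Function.Injective (![1, 0] : Fin 2 → Fin 2) := by decide
  refine le_trans (card_le_of_aeval _ (rename ![1, 0] r) ?_ ?_) (totalDegree_rename_le _ _)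
  · intro h0
    exact hr (rename_injective _ hinj (by rw [h0, map_zero]))
  intro u hu
  rw [Finset.mem_image] at hu
  obtain ⟨l, hl, rfl⟩ := hu
  have := h l hl
  rw [rM, aeval_rename] at this
  rw [aeval_rename, ← this]
  congr 2
  ext i : 1
  fin_cases i <;> rfl

theorem derivative_aeval (φ : Fin 3 → Polynomial K) (f : MvPolynomial (Fin 3) K) :
    Polynomial.derivative (aeval φ f) =
      ∑ i, aeval φ (pderiv i f) * Polynomial.derivative (φ i) := by
  induction f using MvPolynomial.induction_on with
  | C a => simp
  | add p q hp hq =>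
    simp only [map_add, hp, hq, add_mul, Finset.sum_add_distrib]
  | mul_X p j hp =>
    simp only [map_mul, Polynomial.derivative_mul, hp, aeval_X, pderiv_mul, map_add, pderiv_X,
      add_mul, Finset.sum_add_distrib]
    congr 1
    · rw [Finset.sum_mul]
      refine Finset.sum_congr rfl (fun i _ => by ring)
    · rw [Finset.sum_eq_single j]
      · simp
      · intro b _ hb
        simp [hb.symm]
      · simp

theorem derivative_rL (l : K × K × K) (f : MvPolynomial (Fin 3) K) :
    Polynomial.derivative (rL l f) =
      Polynomial.C l.2.1 * rL l (pderiv 0 f) + rL l (pderiv 2 f) := by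
  rw [rL, derivative_aeval, Fin.sum_univ_three]
  simp
  ring

/-- The (partial) flecnode polynomial. -/
noncomputable def GU (f : MvPolynomial (Fin 3) K) : MvPolynomial (Fin 3) K :=
  pderiv 2 (pderiv 2 f) * (pderiv 0 f) ^ 2
    - (pderiv 2 (pderiv 0 f) + pderiv 0 (pderiv 2 f)) * pderiv 2 f * pderiv 0 f
    + pderiv 0 (pderiv 0 f) * (pderiv 2 f) ^ 2

theorem totalDegree_pderiv_le' (i : Fin 3) (f : MvPolynomial (Fin 3) K) :
    (pderiv i f).totalDegree ≤ f.totalDegree - 1 := by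
  rw [totalDegree, Finset.sup_le_iff]
  intro m hm
  rw [mem_support_iff, coeff_pderiv] at hm
  have h1 : m + Finsupp.single i 1 ∈ f.support := by
    rw [mem_support_iff]
    intro h; rw [h, zero_mul] at hm; exact hm rfl
  have h2 := le_totalDegree h1
  rw [Finsupp.sum_add_index' (by simp) (by simp)] at h2
  simp at h2
  omega

theorem totalDegree_pderiv_le (i : Fin 3) (f : MvPolynomial (Fin 3) K) :
    (pderiv i f).totalDegree ≤ f.totalDegree :=
  (totalDegree_pderiv_le' i f).trans (Nat.sub_le _ _)

theorem totalDegree_GU (f : MvPolynomial (Fin 3) K) {d : ℕ} (hd : f.totalDegree ≤ d) :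
    (GU f).totalDegree ≤ 3 * d := by
  have h1 : ∀ i, (pderiv i f).totalDegree ≤ d := fun i => (totalDegree_pderiv_le i f).trans hd
  have h2 : ∀ i j, (pderiv i (pderiv j f)).totalDegree ≤ d :=
    fun i j => (totalDegree_pderiv_le i _).trans (h1 j)
  have hm : ∀ a b c : MvPolynomial (Fin 3) K, a.totalDegree ≤ d → b.totalDegree ≤ d →
      c.totalDegree ≤ d → (a * b * c).totalDegree ≤ 3 * d := by
    intro a b c ha hb hc
    refine (totalDegree_mul _ _).trans ?_
    have := totalDegree_mul a b
    omega
  unfold GU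
  refine (totalDegree_add _ _).trans (max_le ((totalDegree_sub _ _).trans (max_le ?_ ?_)) ?_)
  · rw [pow_two, ← mul_assoc]; exact hm _ _ _ (h2 _ _) (h1 _) (h1 _)
  · exact hm _ _ _ ((totalDegree_add _ _).trans (max_le (h2 _ _) (h2 _ _))) (h1 _) (h1 _)
  · rw [pow_two, ← mul_assoc]; exact hm _ _ _ (h2 _ _) (h1 _) (h1 _)

theorem derivative2_rL (l : K × K × K) (f : MvPolynomial (Fin 3) K) :
    Polynomial.derivative (Polynomial.derivative (rL l f)) =
      Polynomial.C l.2.1 ^ 2 * rL l (pderiv 0 (pderiv 0 f))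
      + Polynomial.C l.2.1 * rL l (pderiv 2 (pderiv 0 f) + pderiv 0 (pderiv 2 f))
      + rL l (pderiv 2 (pderiv 2 f)) := by
  rw [derivative_rL, Polynomial.derivative_add, Polynomial.derivative_C_mul, derivative_rL,
    derivative_rL, map_add]
  ring

/-- `GU` in terms of derivatives along the line. -/
theorem rL_GU (l : K × K × K) (f : MvPolynomial (Fin 3) K) :
    ∃ s, rL l (GU f) = (rL l (pderiv 0 f)) ^ 2 *
      Polynomial.derivative (Polynomial.derivative (rL l f))
      + Polynomial.derivative (rL l f) * s := by
  refine ⟨- rL l (pderiv 2 (pderiv 0 f) + pderiv 0 (pderiv 2 f)) * rL l (pderiv 0 f)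
    + rL l (pderiv 0 (pderiv 0 f)) * (Polynomial.derivative (rL l f)
      - 2 * Polynomial.C l.2.1 * rL l (pderiv 0 f)), ?_⟩
  rw [derivative2_rL, derivative_rL, GU]
  simp only [map_add, map_sub, map_mul, map_pow]
  ring

theorem rL_GU_eq_zero {l : K × K × K} {f : MvPolynomial (Fin 3) K} (h : rL l f = 0) :
    rL l (GU f) = 0 := by
  obtain ⟨s, hs⟩ := rL_GU l f
  rw [hs, h]; simp

theorem ode {p : ℕ} [CharP K p] (φ a b c : Polynomial K) (v : K)
    (h : a * Polynomial.derivative (Polynomial.derivative φ)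
      = b * φ + c * Polynomial.derivative φ)
    (ha : a.eval v ≠ 0) (h0 : φ.eval v = 0) (h1 : (Polynomial.derivative φ).eval v = 0)
    (hdeg : φ.natDegree < p) : φ = 0 := by
  by_contra hφ
  obtain ⟨ψ, hψ, hnd⟩ := Polynomial.exists_eq_pow_rootMultiplicity_mul_and_not_dvd φ hφ v
  set m := φ.rootMultiplicity v with hm
  have hψv : ψ.eval v ≠ 0 := by
    intro h'; exact hnd (Polynomial.dvd_iff_isRoot.mpr h')
  have hmd : m ≤ φ.natDegree := by
    rw [hψ, Polynomial.natDegree_mul (pow_ne_zero _ (Polynomial.X_sub_C_ne_zero v))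
      (by rintro rfl; simp at hψv)]
    simp
  clear_value m
  rcases m with _ | _ | n
  · rw [hψ] at h0; simp at h0; exact hψv h0
  · rw [hψ] at h1; simp at h1; exact hψv h1
  · have e1 : Polynomial.derivative φ = (Polynomial.X - Polynomial.C v) ^ (n + 1) *
        (((n + 2 : ℕ) : Polynomial K) * ψ + (Polynomial.X - Polynomial.C v) *
          Polynomial.derivative ψ) := by
      rw [hψ]
      simp only [Polynomial.derivative_mul, Polynomial.derivative_X_sub_C_pow]
      simp
      ring
    have e2 : Polynomial.derivative (Polynomial.derivative φ) =
        (Polynomial.X - Polynomial.C v) ^ n *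
        (((n + 2 : ℕ) : Polynomial K) * ((n + 1 : ℕ) : Polynomial K) * ψ +
          (Polynomial.X - Polynomial.C v) * (2 * ((n + 2 : ℕ) : Polynomial K) *
          Polynomial.derivative ψ + (Polynomial.X - Polynomial.C v) *
          Polynomial.derivative (Polynomial.derivative ψ))) := by
      rw [e1]
      simp only [Polynomial.derivative_mul, Polynomial.derivative_X_sub_C_pow,
        Polynomial.derivative_add, Polynomial.derivative_natCast]
      simp
      ring
    have e3 : (Polynomial.X - Polynomial.C v) ^ n * (a *
        (((n + 2 : ℕ) : Polynomial K) * ((n + 1 : ℕ) : Polynomial K) * ψ +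
          (Polynomial.X - Polynomial.C v) * (2 * ((n + 2 : ℕ) : Polynomial K) *
          Polynomial.derivative ψ + (Polynomial.X - Polynomial.C v) *
          Polynomial.derivative (Polynomial.derivative ψ)))) =
        (Polynomial.X - Polynomial.C v) ^ n * ((Polynomial.X - Polynomial.C v) *
        (b * (Polynomial.X - Polynomial.C v) * ψ + c * (((n + 2 : ℕ) : Polynomial K) * ψ +
          (Polynomial.X - Polynomial.C v) * Polynomial.derivative ψ))) := by
      rw [e2, e1] at h
      nth_rewrite 1 [hψ] at h
      linear_combination h
    have e4 := mul_left_cancel₀ (pow_ne_zero n (Polynomial.X_sub_C_ne_zero v)) e3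
    have e5 := congrArg (Polynomial.eval v) e4
    simp only [Polynomial.eval_mul, Polynomial.eval_add, Polynomial.eval_sub, Polynomial.eval_X,
      Polynomial.eval_C, Polynomial.eval_natCast, sub_self, zero_mul, add_zero] at e5
    have c1 : ((n + 2 : ℕ) : K) ≠ 0 := by
      rw [Ne, CharP.cast_eq_zero_iff K p]
      intro hd
      have := Nat.le_of_dvd (by omega) hd
      omega
    have c2 : ((n + 1 : ℕ) : K) ≠ 0 := by
      rw [Ne, CharP.cast_eq_zero_iff K p]
      intro hd
      have := Nat.le_of_dvd (by omega) hd
      omega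
    exact mul_ne_zero ha (mul_ne_zero (mul_ne_zero c1 c2) hψv) e5

/-- If `f` divides its flecnode polynomial, then through each nondegenerate point
there is a line. -/
theorem line_of_flec {p : ℕ} [CharP K p] {f : MvPolynomial (Fin 3) K} (hG : f ∣ GU f)
    (hd : f.totalDegree < p) (u v y : K) (h0 : eval ![y, u, v] f = 0)
    (h1 : eval ![y, u, v] (pderiv 0 f) ≠ 0) :
    rL (u, - eval ![y, u, v] (pderiv 2 f) / eval ![y, u, v] (pderiv 0 f),
      y + eval ![y, u, v] (pderiv 2 f) / eval ![y, u, v] (pderiv 0 f) * v) f = 0 := by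
  set a := eval ![y, u, v] (pderiv 0 f) with ha
  set b := eval ![y, u, v] (pderiv 2 f) with hb
  set l : K × K × K := (u, - b / a, y + b / a * v) with hl
  have hpt : ![l.2.1 * v + l.2.2, l.1, v] = ![y, u, v] := by
    congr 1
    simp only [hl]
    ring
  obtain ⟨q, hq⟩ := hG
  obtain ⟨s, hs⟩ := rL_GU l f
  refine ode (p := p) (rL l f) ((rL l (pderiv 0 f)) ^ 2) (rL l q) (-s) v ?_ ?_ ?_ ?_ ?_
  · have := congrArg (rL l) hq
    rw [map_mul, hs] at this
    linear_combination this
  · rw [Polynomial.eval_pow, eval_rL, hpt]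
    exact pow_ne_zero _ h1
  · rw [eval_rL, hpt, h0]
  · rw [derivative_rL, Polynomial.eval_add, Polynomial.eval_mul, Polynomial.eval_C, eval_rL,
      eval_rL, hpt, ← ha, ← hb]
    simp only [hl]
    field_simp
    ring
  · exact lt_of_le_of_lt (natDegree_rL l f) hd

end RudnevAux


namespace RudnevAux

open MvPolynomial

variable {K : Type*} [Field K]

theorem exists_elim' (f g : MvPolynomial (Fin 3) K)
    (hf : Irreducible f) (hY : f.degreeOf 0 ≠ 0) (hfg : ¬ f ∣ g) :
    ∃ (r : MvPolynomial (Fin 2) K) (a b : MvPolynomial (Fin 3) K), r ≠ 0 ∧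
      f * a + g * b = rename Fin.succ r := by
  obtain ⟨r, a, b, h1, -, h2⟩ := exists_elim (d := f.totalDegree + g.totalDegree) f g hf
    (by omega) (by omega) hY hfg
  exact ⟨r, a, b, h1, h2⟩

theorem rM_aeval_X1 (m : K × K × K) (q : Polynomial K) :
    rM m (Polynomial.aeval (X 1 : MvPolynomial (Fin 3) K) q) = q := by
  have h : rM m (Polynomial.aeval (X 1 : MvPolynomial (Fin 3) K) q)
      = Polynomial.aeval (rM m (X 1)) q := (Polynomial.aeval_algHom_apply (rM m) _ q).symm
  rw [h]
  simp [rM]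

theorem rL_aeval_X1 (l : K × K × K) (q : Polynomial K) :
    rL l (Polynomial.aeval (X 1 : MvPolynomial (Fin 3) K) q) = Polynomial.C (q.eval l.1) := by
  have h : rL l (Polynomial.aeval (X 1 : MvPolynomial (Fin 3) K) q)
      = Polynomial.aeval (rL l (X 1)) q := (Polynomial.aeval_algHom_apply (rL l) _ q).symm
  rw [h]
  have : rL l (X 1) = Polynomial.C l.1 := by simp [rL]
  rw [this]
  have h2 := Polynomial.aeval_algebraMap_apply (Polynomial K) l.1 q
  rw [Polynomial.algebraMap_eq] at h2
  rw [h2]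
  simp

theorem rL_X0 (l : K × K × K) :
    rL l (X 0) = Polynomial.C l.2.1 * Polynomial.X + Polynomial.C l.2.2 := by simp [rL]
theorem rL_X1 (l : K × K × K) : rL l (X 1) = Polynomial.C l.1 := by simp [rL]
theorem rL_X2 (l : K × K × K) : rL l (X 2) = Polynomial.X := by simp [rL]
theorem rL_C (l : K × K × K) (a : K) : rL l (C a) = Polynomial.C a := by simp [rL]
theorem rM_X0 (l : K × K × K) :
    rM l (X 0) = Polynomial.C l.2.1 * Polynomial.X + Polynomial.C l.2.2 := by simp [rM]
theorem rM_X1 (l : K × K × K) : rM l (X 1) = Polynomial.X := by simp [rM]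
theorem rM_X2 (l : K × K × K) : rM l (X 2) = Polynomial.C l.1 := by simp [rM]
theorem rM_C (l : K × K × K) (a : K) : rM l (C a) = Polynomial.C a := by simp [rM]

theorem not_dvd_aeval_X1 {f : MvPolynomial (Fin 3) K} (hY : f.degreeOf 0 ≠ 0) {q : Polynomial K}
    (hq : q ≠ 0) : ¬ f ∣ Polynomial.aeval (X 1 : MvPolynomial (Fin 3) K) q := by
  intro h
  have h1 := map_dvd (finSuccEquiv K 2) h
  have h2 : finSuccEquiv K 2 (Polynomial.aeval (X 1 : MvPolynomial (Fin 3) K) q)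
      = Polynomial.C (Polynomial.aeval (X 0 : MvPolynomial (Fin 2) K) q) := by
    have e1 : finSuccEquiv K 2 (Polynomial.aeval (X 1 : MvPolynomial (Fin 3) K) q)
      = Polynomial.aeval (finSuccEquiv K 2 (X 1)) q :=
        (Polynomial.aeval_algHom_apply (finSuccEquiv K 2).toAlgHom _ q).symm
    have e2 : finSuccEquiv K 2 (X 1) = Polynomial.C (X 0) :=
      finSuccEquiv_X_succ (R := K) (n := 2) (j := 0)
    rw [e1, e2]
    exact (Polynomial.aeval_algebraMap_apply (Polynomial (MvPolynomial (Fin 2) K))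
      (X 0 : MvPolynomial (Fin 2) K) q)
  have h3 : finSuccEquiv K 2 (Polynomial.aeval (X 1 : MvPolynomial (Fin 3) K) q) ≠ 0 := by
    intro h0
    have h4 : Polynomial.aeval (X 1 : MvPolynomial (Fin 3) K) q = 0 := by simpa using h0
    have := rM_aeval_X1 (0, 0, 0) q
    rw [h4, map_zero] at this
    exact hq this.symm
  have h5 := Polynomial.natDegree_le_of_dvd h1 h3
  rw [natDegree_finSuccEquiv, h2, Polynomial.natDegree_C] at h5
  omega

/-- The ruled case: `f` is a bilinear surface. -/
theorem bilinear_of_flec [Infinite K] {p : ℕ} [CharP K p] {f : MvPolynomial (Fin 3) K}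
    (hf : Irreducible f) (hY : f.degreeOf 0 ≠ 0) (hG : f ∣ GU f) (hd : f.totalDegree < p)
    (m₁ m₂ : K × K × K) (h1 : rM m₁ f = 0) (h2 : rM m₂ f = 0)
    (h12 : m₁.1 ≠ m₂.1) (hns : rM m₁ (pderiv 0 f) ≠ 0) :
    ∃ α β γ δ : K, ∀ m, rM m f = 0 → m.2.1 = α * m.1 + β ∧ m.2.2 = γ * m.1 + δ := by
  classical
  obtain ⟨v₁, c₁, s₁⟩ := m₁
  obtain ⟨v₂, c₂, s₂⟩ := m₂
  set q := rM (v₁, c₁, s₁) (pderiv 0 f) with hq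
  set r := rM (v₁, c₁, s₁) (pderiv 2 f) with hr
  set P : MvPolynomial (Fin 3) K := Polynomial.aeval (X 1 : MvPolynomial (Fin 3) K) q *
    (X 0 - (C c₁ * X 1 + C s₁)) + Polynomial.aeval (X 1 : MvPolynomial (Fin 3) K) r *
      (X 2 - C v₁) with hP
  have hfP : f ∣ P := by
    by_contra hnd
    obtain ⟨r₀, a, b, hr₀, hab⟩ := exists_elim' f P hf hY hnd
    have hinf : {u : K | q.eval u ≠ 0}.Infinite := by
      have : {u : K | q.eval u ≠ 0} = {u : K | q.eval u = 0}ᶜ := by ext; simp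
      rw [this]
      refine Set.Finite.infinite_compl ?_
      refine (q.roots.toFinset.finite_toSet).subset ?_
      intro u hu
      simp only [Set.mem_ofPred_eq] at hu
      simp [hns, hu]
    obtain ⟨t, ht, htc⟩ := hinf.exists_subset_card_eq (r₀.totalDegree + 1)
    let lu : K → K × K × K := fun u => (u, - r.eval u / q.eval u,
      (c₁ * u + s₁) + r.eval u / q.eval u * v₁)
    have hcard := card_le_of_rL (R := t.image lu) (by
      intro x hx y hy hxy
      simp only [Finset.coe_image, Set.mem_image] at hx hy
      obtain ⟨u, _, rfl⟩ := hx
      obtain ⟨w, _, rfl⟩ := hy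
      simp only [lu] at hxy
      rw [hxy]) r₀ hr₀ (by
      intro l hl
      rw [Finset.mem_image] at hl
      obtain ⟨u, hu, rfl⟩ := hl
      have hqu : q.eval u ≠ 0 := ht hu
      have e0 : eval ![c₁ * u + s₁, u, v₁] f = 0 := by
        have := eval_rM (v₁, c₁, s₁) f u
        rw [h1] at this
        simpa using this.symm
      have e1 : eval ![c₁ * u + s₁, u, v₁] (pderiv 0 f) = q.eval u :=
        (eval_rM (v₁, c₁, s₁) (pderiv 0 f) u).symm
      have e2 : eval ![c₁ * u + s₁, u, v₁] (pderiv 2 f) = r.eval u :=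
        (eval_rM (v₁, c₁, s₁) (pderiv 2 f) u).symm
      have hl0 := line_of_flec (p := p) hG hd u v₁ (c₁ * u + s₁) e0 (by rw [e1]; exact hqu)
      rw [e1, e2] at hl0
      have hP0 : rL (lu u) P = 0 := by
        rw [hP]
        simp only [map_add, map_mul, map_sub, rL_aeval_X1, rL_X0, rL_X1, rL_X2, rL_C, lu]
        have e3 : (Polynomial.C (Polynomial.eval u q) : Polynomial K) *
            Polynomial.C (Polynomial.eval u r / Polynomial.eval u q)
            = Polynomial.C (Polynomial.eval u r) := by
          rw [← map_mul]; congr 1; field_simp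
        have e4 : (Polynomial.C (-Polynomial.eval u r / Polynomial.eval u q) : Polynomial K)
            = - Polynomial.C (Polynomial.eval u r / Polynomial.eval u q) := by
          rw [← map_neg]; congr 1; ring
        rw [e4]
        linear_combination (Polynomial.C v₁ - Polynomial.X) * e3
      rw [← hab, map_add, map_mul, map_mul, hl0, hP0]
      simp)
    rw [Finset.card_image_of_injective _ (by
      intro x y hxy
      exact congrArg Prod.fst hxy), htc] at hcard
    omega
  have hP2 : rM (v₂, c₂, s₂) P = 0 := by
    obtain ⟨w, hw⟩ := hfP
    rw [hw, map_mul, h2, zero_mul]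
  have hv : v₂ - v₁ ≠ 0 := sub_ne_zero.mpr (fun h => h12 h.symm)
  set κ := (c₂ - c₁) / (v₂ - v₁) with hκ
  set σ := (s₂ - s₁) / (v₂ - v₁) with hσ
  have hκ' : c₂ = c₁ + κ * (v₂ - v₁) := by rw [hκ]; field_simp; ring
  have hσ' : s₂ = s₁ + σ * (v₂ - v₁) := by rw [hσ]; field_simp; ring
  have hr2 : r = - q * (Polynomial.C κ * Polynomial.X + Polynomial.C σ) := by
    rw [hP] at hP2
    simp only [map_add, map_mul, map_sub, rM_aeval_X1, rM_X0, rM_X1, rM_X2, rM_C] at hP2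
    rw [hκ', hσ'] at hP2
    have hv' : (Polynomial.C (v₂ - v₁) : Polynomial K) ≠ 0 := Polynomial.C_ne_zero.mpr hv
    apply mul_right_cancel₀ hv'
    simp only [map_add, map_mul, map_sub] at hP2 ⊢
    linear_combination hP2
  have hP3 : P = Polynomial.aeval (X 1 : MvPolynomial (Fin 3) K) q *
      (X 0 - (C c₁ * X 1 + C s₁) - (C κ * X 1 + C σ) * (X 2 - C v₁)) := by
    rw [hP, hr2]
    simp only [map_add, map_mul, map_neg, Polynomial.aeval_X, Polynomial.aeval_C, algebraMap_eq]
    ring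
  rw [hP3] at hfP
  have hdvd := (hf.prime.dvd_or_dvd hfP).resolve_left (not_dvd_aeval_X1 hY hns)
  refine ⟨κ, c₁ - κ * v₁, σ, s₁ - σ * v₁, ?_⟩
  rintro ⟨v, c, s⟩ hm
  obtain ⟨w, hw⟩ := hdvd
  have h0 := congrArg (rM (v, c, s)) hw
  rw [map_mul, hm, zero_mul] at h0
  simp only [map_add, map_mul, map_sub, rM_X0, rM_X1, rM_X2, rM_C] at h0
  have hc0 := congrArg (Polynomial.eval 0) h0
  have hc1 := congrArg (Polynomial.eval 1) h0
  simp at hc0 hc1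
  constructor
  · simp only; linear_combination hc1 - hc0
  · simp only; linear_combination hc0

end RudnevAux


namespace RudnevAux

open MvPolynomial

variable {K : Type*} [Field K]

open Classical in
/-- number of incidences -/
noncomputable def incN (R G : Finset (K × K × K)) : ℕ :=
  ((R ×ˢ G).filter (fun q => inc q.1 q.2)).card

open Classical in
theorem incN_eq_sum_right (R G : Finset (K × K × K)) :
    incN R G = ∑ m ∈ G, (R.filter (fun l => inc l m)).card := by
  rw [incN, Finset.card_filter, Finset.sum_product_right]
  refine Finset.sum_congr rfl (fun m _ => ?_)
  rw [Finset.card_filter]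

open Classical in
theorem incN_eq_sum_left (R G : Finset (K × K × K)) :
    incN R G = ∑ l ∈ R, (G.filter (fun m => inc l m)).card := by
  rw [incN, Finset.card_filter, Finset.sum_product]
  refine Finset.sum_congr rfl (fun m _ => ?_)
  rw [Finset.card_filter]

open Classical in
theorem incN_le_right {R G : Finset (K × K × K)} {c : ℕ}
    (h : ∀ m ∈ G, (R.filter (fun l => inc l m)).card ≤ c) : incN R G ≤ c * G.card := by
  rw [incN_eq_sum_right, mul_comm]
  simpa using Finset.sum_le_card_nsmul _ _ _ h

open Classical in
theorem incN_le_left {R G : Finset (K × K × K)} {c : ℕ}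
    (h : ∀ l ∈ R, (G.filter (fun m => inc l m)).card ≤ c) : incN R G ≤ c * R.card := by
  rw [incN_eq_sum_left, mul_comm]
  simpa using Finset.sum_le_card_nsmul _ _ _ h

theorem incN_le_mul (R G : Finset (K × K × K)) : incN R G ≤ R.card * G.card := by
  classical
  exact incN_le_right (fun m _ => Finset.card_le_card (Finset.filter_subset _ _))

theorem incN_split_left (P : K × K × K → Prop) [DecidablePred P]
    [DecidablePred (fun l => ¬ P l)] (R G : Finset (K × K × K)) :
    incN R G = incN (R.filter P) G + incN (R.filter (fun l => ¬ P l)) G := by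
  rw [incN_eq_sum_left, incN_eq_sum_left, incN_eq_sum_left, Finset.sum_filter_add_sum_filter_not]

theorem incN_split_right (P : K × K × K → Prop) [DecidablePred P]
    [DecidablePred (fun l => ¬ P l)] (R G : Finset (K × K × K)) :
    incN R G = incN R (G.filter P) + incN R (G.filter (fun l => ¬ P l)) := by
  rw [incN_eq_sum_right, incN_eq_sum_right, incN_eq_sum_right, Finset.sum_filter_add_sum_filter_not]

theorem not_dvd_pderiv {p : ℕ} [CharP K p] {f : MvPolynomial (Fin 3) K}
    (hY : f.degreeOf 0 ≠ 0) (hd : f.totalDegree < p) : ¬ f ∣ pderiv 0 f := by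
  have hne : pderiv 0 f ≠ 0 := by
    obtain ⟨m, hm, hm0⟩ : ∃ m ∈ f.support, m 0 ≠ 0 := by
      by_contra hcon
      push Not at hcon
      apply hY
      rw [degreeOf_eq_sup]
      exact Nat.le_zero.mp (Finset.sup_le (fun m hm => (hcon m hm).le))
    intro h0
    have h1 := congrArg (coeff (m - Finsupp.single 0 1)) h0
    rw [coeff_pderiv, coeff_zero] at h1
    have h2 : m - Finsupp.single 0 1 + Finsupp.single 0 1 = m := by
      ext i
      by_cases hi : i = 0
      · subst hi; simp; omega
      · simp [Ne.symm hi]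
    rw [h2] at h1
    rcases mul_eq_zero.mp h1 with h1 | h1
    · exact (mem_support_iff.mp hm) h1
    · have h3 : ((m - Finsupp.single 0 1 : Fin 3 →₀ ℕ) 0 : ℕ) + 1 = m 0 := by
        simp; omega
      have h4 : ((m 0 : ℕ) : K) = 0 := by
        rw [← h3]; push_cast; exact h1
      rw [CharP.cast_eq_zero_iff K p] at h4
      have h5 := Nat.le_of_dvd (Nat.pos_of_ne_zero hm0) h4
      have h6 : m 0 ≤ f.degreeOf 0 := by
        rw [degreeOf_eq_sup]; exact Finset.le_sup (f := fun m : Fin 3 →₀ ℕ => m 0) hm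
      have h7 := degreeOf_le_totalDegree f 0
      omega
  intro hdvd
  have h1 := totalDegree_le_of_dvd_of_isDomain hdvd hne
  have h2 := totalDegree_pderiv_le' 0 f
  have h7 := degreeOf_le_totalDegree f 0
  omega

theorem exists_rename_of_degreeOf {f : MvPolynomial (Fin 3) K} (hY : f.degreeOf 0 = 0) :
    ∃ r : MvPolynomial (Fin 2) K, f = rename Fin.succ r := by
  have h : (f.vars : Set (Fin 3)) ⊆ Set.range (Fin.succ : Fin 2 → Fin 3) := by
    intro i hi
    have : i ≠ 0 := by
      rintro rfl
      have hi' : (0 : Fin 3) ∈ f.vars := hi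
      rw [mem_vars_iff_mem_support] at hi'
      obtain ⟨m, hm, hm0⟩ := hi'
      have h6 : m 0 ≤ f.degreeOf 0 := by
        rw [degreeOf_eq_sup]; exact Finset.le_sup (f := fun m : Fin 3 →₀ ℕ => m 0) hm
      rw [Finsupp.mem_support_iff] at hm0
      omega
    obtain ⟨j, rfl⟩ := Fin.exists_succ_eq.mpr this
    exact ⟨j, rfl⟩
  obtain ⟨q, hq⟩ := exists_rename_eq_of_vars_subset_range f Fin.succ (Fin.succ_injective _) h
  exact ⟨q, hq.symm⟩

theorem irr_case [Infinite K] {p : ℕ} [CharP K p] {f : MvPolynomial (Fin 3) K} (hf : Irreducible f)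
    (hdp : f.totalDegree < p) {R G : Finset (K × K × K)}
    (hR : Set.InjOn Prod.fst (R : Set (K × K × K))) (hG : Set.InjOn Prod.fst (G : Set (K × K × K)))
    (hRf : ∀ l ∈ R, rL l f = 0) (hGf : ∀ m ∈ G, rM m f = 0) {k : ℕ} {Φ : ℝ} (hΦ : 0 ≤ Φ)
    (hk : ∀ α β γ δ : K, ∀ G' ⊆ G,
      (∀ m ∈ G', m.2.1 = α * m.1 + β ∧ m.2.2 = γ * m.1 + δ) → G'.card ≤ k)
    (H : ∀ R' ⊆ R, ∀ G' ⊆ G, R'.card ≤ 12 * f.totalDegree ^ 2 → G'.card ≤ 12 * f.totalDegree ^ 2 →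
      (incN R' G' : ℝ) ≤ Φ + k * R'.card) :
    (incN R G : ℝ) ≤ 3 * f.totalDegree * (R.card + G.card) + k * R.card + Φ := by
  classical
  set d := f.totalDegree with hd
  have hR0 : (0 : ℝ) ≤ R.card := Nat.cast_nonneg _
  have hG0 : (0 : ℝ) ≤ G.card := Nat.cast_nonneg _
  have hk0 : (0 : ℝ) ≤ k := Nat.cast_nonneg _
  have hd0 : (0 : ℝ) ≤ d := Nat.cast_nonneg _
  by_cases hY : f.degreeOf 0 = 0
  · obtain ⟨r, hr⟩ := exists_rename_of_degreeOf hY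
    have hr0 : r ≠ 0 := by
      rintro rfl; rw [map_zero] at hr; exact hf.ne_zero hr
    have h1 : R.card ≤ d := by
      have := card_le_of_rL hR r hr0 (fun l hl => by rw [← hr]; exact hRf l hl)
      refine this.trans ?_
      have h2 := totalDegree_rename_le (![0, 0, 1] : Fin 3 → Fin 2) (rename Fin.succ r)
      have h3 : rename (![0, 0, 1] : Fin 3 → Fin 2) (rename Fin.succ r) = r := by
        rw [rename_rename]
        have : (![0, 0, 1] : Fin 3 → Fin 2) ∘ Fin.succ = id := by
          ext i; fin_cases i <;> rfl
        rw [this, rename_id_apply]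
      rw [h3] at h2
      rwa [hd, hr]
    have h2 := incN_le_mul R G
    have h3 : (incN R G : ℝ) ≤ d * G.card := by
      exact_mod_cast h2.trans (Nat.mul_le_mul_right _ h1)
    nlinarith [mul_nonneg hd0 hR0, mul_nonneg hd0 hG0, mul_nonneg hk0 hR0]
  have hd1 : 1 ≤ d := by
    have := degreeOf_le_totalDegree f 0
    omega
  have hd1' : (1 : ℝ) ≤ d := by exact_mod_cast hd1
  by_cases hGU : f ∣ GU f
  · by_cases hns : ∃ m₁ ∈ G, rM m₁ (pderiv 0 f) ≠ 0
    · obtain ⟨m₁, hm₁, hns⟩ := hns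
      by_cases h2 : ∃ m₂ ∈ G, m₁ ≠ m₂
      · obtain ⟨m₂, hm₂, h12⟩ := h2
        obtain ⟨α, β, γ, δ, hh⟩ := bilinear_of_flec hf hY hGU hdp m₁ m₂ (hGf _ hm₁) (hGf _ hm₂)
          (fun h => h12 (hG hm₁ hm₂ h)) hns
        have h1 := hk α β γ δ G subset_rfl (fun m hm => hh m (hGf m hm))
        have h3 : (incN R G : ℝ) ≤ k * R.card := by
          have := (incN_le_mul R G).trans (Nat.mul_le_mul_left _ h1)
          rw [mul_comm] at this
          exact_mod_cast this
        nlinarith [mul_nonneg hd0 hR0, mul_nonneg hd0 hG0, mul_nonneg hk0 hR0]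
      · push Not at h2
        have h1 : G.card ≤ 1 := Finset.card_le_one.mpr
          (fun a ha b hb => (h2 a ha).symm.trans (h2 b hb))
        have h3 : (incN R G : ℝ) ≤ R.card := by
          have := (incN_le_mul R G).trans (Nat.mul_le_mul_left _ h1)
          rw [mul_one] at this
          exact_mod_cast this
        nlinarith [mul_nonneg hd0 hR0, mul_nonneg hd0 hG0, mul_nonneg hk0 hR0]
    · push Not at hns
      obtain ⟨r, a, b, hr0, hrd, hrab⟩ := exists_elim f (pderiv 0 f) (d := d) hf le_rfl
        ((totalDegree_pderiv_le 0 f).trans (by omega)) hY (not_dvd_pderiv hY hdp)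
      have hGc : G.card ≤ 12 * d ^ 2 := by
        refine (card_le_of_rM hG r hr0 (fun m hm => ?_)).trans hrd
        rw [← hrab, map_add, map_mul, map_mul, hGf m hm, hns m hm]; simp
      have hsp := incN_split_left (fun l => rL l (pderiv 0 f) = 0) R G
      set R1 := R.filter (fun l => rL l (pderiv 0 f) = 0)
      set R2 := R.filter (fun l => ¬ rL l (pderiv 0 f) = 0)
      have hR1 : R1 ⊆ R := Finset.filter_subset _ _
      have hR2 : R2 ⊆ R := Finset.filter_subset _ _
      have hR1c : R1.card ≤ 12 * d ^ 2 := by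
        refine (card_le_of_rL (hR.mono (Finset.coe_subset.mpr hR1)) r hr0 (fun m hm => ?_)).trans hrd
        rw [Finset.mem_filter] at hm
        rw [← hrab, map_add, map_mul, map_mul, hRf m hm.1, hm.2]; simp
      have e1 := H R1 hR1 G subset_rfl hR1c hGc
      have e2 : incN R2 G ≤ d * R2.card := by
        refine incN_le_left (fun l hl => ?_)
        rw [Finset.mem_filter] at hl
        exact (card_inc_le_left hG hns hl.2).trans (totalDegree_pderiv_le 0 f)
      have e2' : (incN R2 G : ℝ) ≤ d * R.card := by
        exact_mod_cast e2.trans (Nat.mul_le_mul_left _ (Finset.card_le_card hR2))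
      have e3 : (k : ℝ) * R1.card ≤ k * R.card := by
        gcongr
      rw [hsp]; push_cast
      nlinarith [mul_nonneg hd0 hR0, mul_nonneg hd0 hG0]
  · obtain ⟨r, a, b, hr0, hrd, hrab⟩ := exists_elim f (GU f) hf le_rfl
        (totalDegree_GU f le_rfl) hY hGU
    have hRc : R.card ≤ 12 * d ^ 2 := by
      refine (card_le_of_rL hR r hr0 (fun m hm => ?_)).trans hrd
      rw [← hrab, map_add, map_mul, map_mul, hRf m hm, rL_GU_eq_zero (hRf m hm)]; simp
    have hsp := incN_split_right (fun l => rM l (GU f) = 0) R G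
    set G1 := G.filter (fun l => rM l (GU f) = 0)
    set G2 := G.filter (fun l => ¬ rM l (GU f) = 0)
    have hG1 : G1 ⊆ G := Finset.filter_subset _ _
    have hG2 : G2 ⊆ G := Finset.filter_subset _ _
    have hG1c : G1.card ≤ 12 * d ^ 2 := by
      refine (card_le_of_rM (hG.mono (Finset.coe_subset.mpr hG1)) r hr0 (fun m hm => ?_)).trans hrd
      rw [Finset.mem_filter] at hm
      rw [← hrab, map_add, map_mul, map_mul, hGf m hm.1, hm.2]; simp
    have e1 := H R subset_rfl G1 hG1 hRc hG1c
    have e2 : incN R G2 ≤ 3 * d * G2.card := by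
      refine incN_le_right (fun l hl => ?_)
      rw [Finset.mem_filter] at hl
      exact (card_inc_le_right hR (fun l hl => rL_GU_eq_zero (hRf l hl)) hl.2).trans
        (totalDegree_GU f le_rfl)
    have e2' : (incN R G2 : ℝ) ≤ 3 * d * G.card := by
      exact_mod_cast e2.trans (Nat.mul_le_mul_left _ (Finset.card_le_card hG2))
    rw [hsp]; push_cast
    nlinarith [mul_nonneg hd0 hR0, mul_nonneg hd0 hG0]

/-- surface lemma -/
theorem surface [Infinite K] {p : ℕ} [CharP K p] {k : ℕ} {c : ℝ} (hc : 0 ≤ c)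
    {R₀ G₀ : Finset (K × K × K)} {D : ℕ} (hDp : D < p)
    (hR₀ : Set.InjOn Prod.fst (R₀ : Set (K × K × K)))
    (hG₀ : Set.InjOn Prod.fst (G₀ : Set (K × K × K)))
    (hk : ∀ α β γ δ : K, ∀ G' ⊆ G₀,
      (∀ m ∈ G', m.2.1 = α * m.1 + β ∧ m.2.2 = γ * m.1 + δ) → G'.card ≤ k)
    (H : ∀ d ≤ D, ∀ R' ⊆ R₀, ∀ G' ⊆ G₀, R'.card ≤ 12 * d ^ 2 → G'.card ≤ 12 * d ^ 2 →
      (incN R' G' : ℝ) ≤ c * d ^ 3 + k * R'.card)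
    (F : MvPolynomial (Fin 3) K) : F ≠ 0 → F.totalDegree ≤ D →
    ∀ R ⊆ R₀, ∀ G ⊆ G₀, (∀ l ∈ R, rL l F = 0) → (∀ m ∈ G, rM m F = 0) →
    (incN R G : ℝ) ≤ 3 * F.totalDegree * (R.card + G.card) + k * R.card
      + c * F.totalDegree ^ 3 := by
  classical
  induction F using WfDvdMonoid.induction_on_irreducible with
  | zero => intro h; exact absurd rfl h
  | unit u hu =>
    intro _ _ R _ G _ hR hG
    have hRe : R = ∅ := by
      rw [Finset.eq_empty_iff_forall_notMem]
      intro l hl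
      have := hu.map (rL l)
      rw [hR l hl] at this
      exact not_isUnit_zero this
    subst hRe
    have : incN ∅ G = 0 := by simp [incN]
    rw [this]; push_cast; positivity
  | mul a i ha hi ih =>
    intro hne hD R hR G hG hRF hGF
    have hi0 : i ≠ 0 := hi.ne_zero
    have htd := totalDegree_mul_of_isDomain hi0 ha
    have e := incN_split_left (fun l => rL l i = 0) R G
    have e1 := incN_split_right (fun l => rM l i = 0) (R.filter (fun l => rL l i = 0)) G
    have e2 := incN_split_right (fun l => rM l i = 0) (R.filter (fun l => ¬ rL l i = 0)) G
    set R1 := R.filter (fun l => rL l i = 0) with hR1d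
    set R2 := R.filter (fun l => ¬ rL l i = 0) with hR2d
    set G1 := G.filter (fun l => rM l i = 0) with hG1d
    set G2 := G.filter (fun l => ¬ rM l i = 0) with hG2d
    have hR1 : R1 ⊆ R := Finset.filter_subset _ _
    have hR2 : R2 ⊆ R := Finset.filter_subset _ _
    have hG1 : G1 ⊆ G := Finset.filter_subset _ _
    have hG2 : G2 ⊆ G := Finset.filter_subset _ _
    have cR : R1.card + R2.card = R.card := Finset.card_filter_add_card_filter_not _
    have cG : G1.card + G2.card = G.card := Finset.card_filter_add_card_filter_not _
    set x := i.totalDegree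
    set y := a.totalDegree
    have b1 := irr_case (p := p) hi (by omega) (hR₀.mono (Finset.coe_subset.mpr (hR1.trans hR)))
      (hG₀.mono (Finset.coe_subset.mpr (hG1.trans hG)))
      (fun l hl => (Finset.mem_filter.mp hl).2) (fun l hl => (Finset.mem_filter.mp hl).2)
      (k := k) (Φ := c * x ^ 3) (by positivity)
      (fun α β γ δ G' hG' h => hk α β γ δ G' (hG'.trans (hG1.trans hG)) h)
      (fun R' hR' G' hG' h1 h2 => H x (by omega) R' (hR'.trans (hR1.trans hR)) G'
        (hG'.trans (hG1.trans hG)) h1 h2)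
    have b2 : incN R1 G2 ≤ x * G2.card := by
      refine incN_le_right (fun m hm => ?_)
      exact card_inc_le_right (hR₀.mono (Finset.coe_subset.mpr (hR1.trans hR)))
        (fun l hl => (Finset.mem_filter.mp hl).2) (Finset.mem_filter.mp hm).2
    have b3 : incN R2 G1 ≤ x * R2.card := by
      refine incN_le_left (fun m hm => ?_)
      exact card_inc_le_left (hG₀.mono (Finset.coe_subset.mpr (hG1.trans hG)))
        (fun l hl => (Finset.mem_filter.mp hl).2) (Finset.mem_filter.mp hm).2
    have b4 := ih ha (by omega) R2 (hR2.trans hR) G2 (hG2.trans hG)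
      (fun l hl => by
        have := hRF l (hR2 hl)
        rw [map_mul] at this
        exact (mul_eq_zero.mp this).resolve_left (Finset.mem_filter.mp hl).2)
      (fun l hl => by
        have := hGF l (hG2 hl)
        rw [map_mul] at this
        exact (mul_eq_zero.mp this).resolve_left (Finset.mem_filter.mp hl).2)
    have b2' : (incN R1 G2 : ℝ) ≤ x * G2.card := by exact_mod_cast b2
    have b3' : (incN R2 G1 : ℝ) ≤ x * R2.card := by exact_mod_cast b3
    rw [htd, e, e1, e2, ← cR, ← cG]
    push_cast
    have hx : (0 : ℝ) ≤ x := Nat.cast_nonneg _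
    have hy : (0 : ℝ) ≤ y := Nat.cast_nonneg _
    have r1 : (0 : ℝ) ≤ R1.card := Nat.cast_nonneg _
    have r2 : (0 : ℝ) ≤ R2.card := Nat.cast_nonneg _
    have g1 : (0 : ℝ) ≤ G1.card := Nat.cast_nonneg _
    have g2 : (0 : ℝ) ≤ G2.card := Nat.cast_nonneg _
    have hcub : c * (x : ℝ) ^ 3 + c * (y : ℝ) ^ 3 ≤ c * ((x : ℝ) + y) ^ 3 := by
      rw [← mul_add]
      refine mul_le_mul_of_nonneg_left ?_ hc
      nlinarith [mul_nonneg (mul_nonneg hx hy) (add_nonneg hx hy)]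
    nlinarith [mul_nonneg hx r1, mul_nonneg hx r2, mul_nonneg hx g1, mul_nonneg hx g2,
      mul_nonneg hy r1, mul_nonneg hy r2, mul_nonneg hy g1, mul_nonneg hy g2]

end RudnevAux


namespace RudnevAux

open MvPolynomial

variable {K : Type*} [Field K]

theorem exists_poly (R : Finset (K × K × K)) (e : ℕ) (he : 3 * R.card < e ^ 2) :
    ∃ F : MvPolynomial (Fin 3) K, F ≠ 0 ∧ F.totalDegree ≤ 3 * (e - 1) ∧ ∀ l ∈ R, rL l F = 0 := by
  classical
  have he0 : 0 < e := by
    rcases Nat.eq_zero_or_pos e with h | h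
    · subst h; simp at he
    · exact h
  let m : (Fin 3 → Fin e) → (Fin 3 →₀ ℕ) := fun t => Finsupp.equivFunOnFinite.symm (fun i => (t i : ℕ))
  have hm : Function.Injective m := by
    intro s t h
    ext i
    have := DFunLike.congr_fun h i
    simpa [m] using this
  let F : ((Fin 3 → Fin e) → K) →ₗ[K] MvPolynomial (Fin 3) K :=
    ∑ t, (monomial (m t)).comp (LinearMap.proj t)
  have hF : ∀ c, F c = ∑ t, monomial (m t) (c t) := by
    intro c; simp [F, LinearMap.sum_apply]
  have hdeg : ∀ c, (F c).totalDegree ≤ 3 * (e - 1) := by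
    intro c
    rw [hF]
    refine totalDegree_finsetSum_le (fun t _ => ?_)
    refine (totalDegree_monomial_le _ _).trans ?_
    rw [Finsupp.sum_fintype _ _ (by simp), Fin.sum_univ_three]
    have := fun i => (t i).2
    have h0 := this 0
    have h1 := this 1
    have h2 := this 2
    simp only [m, Finsupp.equivFunOnFinite_symm_apply_apply, id]
    omega
  let Ψ : ((Fin 3 → Fin e) → K) →ₗ[K] (R × Fin (3 * e) → K) :=
    LinearMap.pi (fun q => (Polynomial.lcoeff K (q.2 : ℕ)).comp ((rL q.1.1).toLinearMap.comp F))
  have hlt : Module.finrank K (R × Fin (3 * e) → K) < Module.finrank K ((Fin 3 → Fin e) → K) := by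
    simp only [Module.finrank_fintype_fun_eq_card, Fintype.card_prod, Fintype.card_fin,
      Fintype.card_coe, Fintype.card_fun]
    calc R.card * (3 * e) = 3 * R.card * e := by ring
      _ < e ^ 2 * e := Nat.mul_lt_mul_of_pos_right he he0
      _ = e ^ 3 := by ring
  have hker := LinearMap.ker_ne_bot_of_finrank_lt (f := Ψ) hlt
  obtain ⟨c, hc, hc0⟩ := (Submodule.ne_bot_iff _).mp hker
  refine ⟨F c, ?_, hdeg c, ?_⟩
  · intro h0
    apply hc0
    ext t
    have := congrArg (coeff (m t)) h0
    rw [hF, coeff_sum, coeff_zero] at this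
    simp only [coeff_monomial, hm.eq_iff] at this
    simpa using this
  · intro l hl
    ext j
    rw [Polynomial.coeff_zero]
    by_cases hj : j < 3 * e
    · have := congrFun (LinearMap.mem_ker.mp hc) (⟨l, hl⟩, ⟨j, hj⟩)
      simpa [Ψ] using this
    · refine Polynomial.coeff_eq_zero_of_natDegree_lt ?_
      have := natDegree_rL l (F c)
      have := hdeg c
      omega

theorem chunk {n k : ℕ} {W : ℝ} (hW : 0 ≤ W) {L M : Finset (K × K × K)}
    (h : ∀ R ⊆ L, R.card ≤ n → (incN R M : ℝ) ≤ W + k * R.card) (t : ℕ) :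
    ∀ L' ⊆ L, L'.card ≤ t * n → (incN L' M : ℝ) ≤ t * W + k * L'.card := by
  classical
  induction t with
  | zero =>
    intro L' _ hc
    have : L' = ∅ := by
      rw [← Finset.card_eq_zero]; omega
    subst this
    simp [incN]
  | succ t ih =>
    intro L' hL' hc
    obtain ⟨R, hR, hRc⟩ := Finset.exists_subset_card_eq (s := L') (n := min n L'.card)
      (min_le_right _ _)
    have e := incN_split_left (fun l => l ∈ R) L' M
    have h1 : L'.filter (fun l => l ∈ R) = R := by
      rw [Finset.filter_mem_eq_inter]; exact Finset.inter_eq_right.mpr hR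
    have h2 : (L'.filter (fun l => l ∈ R)).card + (L'.filter (fun l => ¬ l ∈ R)).card = L'.card :=
      Finset.card_filter_add_card_filter_not _
    rw [h1] at e h2
    set Q := L'.filter (fun l => ¬ l ∈ R)
    have b1 := h R (hR.trans hL') (by omega)
    have b2 := ih Q ((Finset.filter_subset _ _).trans hL') (by
      rw [Nat.succ_mul] at hc
      rcases le_total n L'.card with h3 | h3
      · rw [min_eq_left h3] at hRc; omega
      · rw [min_eq_right h3] at hRc
        have : Q.card = 0 := by omega
        rw [this]; exact Nat.zero_le _)
    rw [e, ← h2]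
    push_cast
    nlinarith

theorem incidence [Infinite K] {p : ℕ} [CharP K p] {k : ℕ} (N : ℕ) :
    ∀ L M : Finset (K × K × K), N ≤ p ^ 2 → L.card ≤ N → M.card ≤ N →
    Set.InjOn Prod.fst (L : Set (K × K × K)) → Set.InjOn Prod.fst (M : Set (K × K × K)) →
    (∀ α β γ δ : K, ∀ G' ⊆ M,
      (∀ m ∈ G', m.2.1 = α * m.1 + β ∧ m.2.2 = γ * m.1 + δ) → G'.card ≤ k) →
    (incN L M : ℝ) ≤ 20000000 * Real.sqrt N ^ 3 + k * L.card := by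
  classical
  induction N using Nat.strong_induction_on with
  | _ N ih =>
  intro L M hNp hL hM hLi hMi hk
  set s := Real.sqrt N with hs
  have hs0 : 0 ≤ s := Real.sqrt_nonneg _
  have hs2 : s ^ 2 = N := Real.sq_sqrt (Nat.cast_nonneg _)
  have hkL : (0 : ℝ) ≤ k * L.card := by positivity
  by_cases hq : N < 10000000000
  · have h1 : (incN L M : ℝ) ≤ N * N := by
      exact_mod_cast (incN_le_mul L M).trans (Nat.mul_le_mul hL hM)
    have h2 : s ≤ 100000 := by
      rw [hs]
      refine Real.sqrt_le_iff.mpr ⟨by norm_num, ?_⟩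
      have : (N : ℝ) ≤ 10000000000 := by exact_mod_cast hq.le
      linarith
    have h3 : (N : ℝ) * N = s * s ^ 3 := by rw [← hs2]; ring
    have h4 : s * s ^ 3 ≤ 100000 * s ^ 3 := by gcongr
    have h5 : 0 ≤ s ^ 3 := by positivity
    linarith
  push Not at hq
  set n := N / 10000000000 + 1 with hn
  have hn1 : N ≤ 10000000000 * n := by omega
  have hn2 : 10000000000 * n ≤ 2 * N := by omega
  set D := 3 * Nat.sqrt (3 * n) with hD
  have hD2 : D ^ 2 ≤ 27 * n := by
    have := Nat.sqrt_le' (3 * n)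
    rw [hD, mul_pow]; omega
  have hDs : (D : ℝ) ≤ s / 10000 := by
    have h1 : ((D : ℝ)) ^ 2 ≤ (s / 10000) ^ 2 := by
      rw [div_pow, hs2]
      have h2 : (D : ℝ) ^ 2 ≤ 27 * n := by exact_mod_cast hD2
      have h3 : (10000000000 : ℝ) * n ≤ 2 * N := by exact_mod_cast hn2
      have h4 : (0 : ℝ) ≤ N := Nat.cast_nonneg _
      rw [le_div_iff₀ (by norm_num)]
      linarith
    exact le_of_sq_le_sq h1 (by positivity)
  have hspos : 0 < s := by
    rw [hs]; apply Real.sqrt_pos.mpr; exact_mod_cast (by omega : 0 < N)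
  have hD0 : (0 : ℝ) ≤ D := Nat.cast_nonneg _
  have hsp : s ≤ p := by
    rw [hs]
    refine Real.sqrt_le_iff.mpr ⟨Nat.cast_nonneg _, ?_⟩
    exact_mod_cast hNp
  have hDp : D < p := by
    have : (D : ℝ) < p := by linarith
    exact_mod_cast this
  have hDN : 12 * D ^ 2 < N := by omega
  set W : ℝ := 7 * D * N + 42 * 20000000 * (D : ℝ) ^ 3 with hW
  have hch : ∀ R ⊆ L, R.card ≤ n → (incN R M : ℝ) ≤ W + k * R.card := by
    intro R hR hRn
    obtain ⟨F, hF0, hFd, hFR⟩ := exists_poly R (Nat.sqrt (3 * n) + 1) (by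
      have := Nat.lt_succ_sqrt' (3 * n)
      simp only [Nat.succ_eq_add_one] at this
      omega)
    have hFD : F.totalDegree ≤ D := by simpa [hD] using hFd
    have e := incN_split_right (fun m => rM m F = 0) R M
    set M1 := M.filter (fun m => rM m F = 0)
    set M2 := M.filter (fun m => ¬ rM m F = 0)
    have hM1 : M1 ⊆ M := Finset.filter_subset _ _
    have hM2 : M2 ⊆ M := Finset.filter_subset _ _
    have b2 : incN R M2 ≤ D * N := by
      refine (incN_le_right (c := D) (fun m hm => ?_)).trans
        (Nat.mul_le_mul_left _ ((Finset.card_le_card hM2).trans hM))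
      exact (card_inc_le_right (hLi.mono (Finset.coe_subset.mpr hR)) hFR
        (Finset.mem_filter.mp hm).2).trans hFD
    have b1 := surface (p := p) (k := k) (c := 42 * 20000000) (by norm_num) hDp hLi hMi hk
      (by
        intro d hd R' hR' G' hG' hRc hGc
        have hdD : 12 * d ^ 2 ≤ 12 * D ^ 2 := by gcongr
        have := ih (12 * d ^ 2) (by omega) R' G' (by omega) hRc hGc
          (hLi.mono (Finset.coe_subset.mpr hR')) (hMi.mono (Finset.coe_subset.mpr hG'))
          (fun α β γ δ G'' hG'' => hk α β γ δ G'' (hG''.trans hG'))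
        have h1 : Real.sqrt ((12 * d ^ 2 : ℕ) : ℝ) ^ 3 ≤ 42 * (d : ℝ) ^ 3 := by
          have h2 : Real.sqrt ((12 * d ^ 2 : ℕ) : ℝ) ^ 2 = 12 * (d : ℝ) ^ 2 := by
            rw [Real.sq_sqrt (Nat.cast_nonneg _)]; push_cast; rfl
          have h3 : Real.sqrt ((12 * d ^ 2 : ℕ) : ℝ) ≤ 3.5 * d := by
            refine Real.sqrt_le_iff.mpr ⟨by positivity, ?_⟩
            push_cast
            have : (0 : ℝ) ≤ (d : ℝ) ^ 2 := by positivity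
            nlinarith
          calc Real.sqrt ((12 * d ^ 2 : ℕ) : ℝ) ^ 3
              = Real.sqrt ((12 * d ^ 2 : ℕ) : ℝ) ^ 2 * Real.sqrt ((12 * d ^ 2 : ℕ) : ℝ) := by ring
            _ ≤ 12 * (d : ℝ) ^ 2 * (3.5 * d) := by
              rw [h2]; gcongr
            _ = 42 * (d : ℝ) ^ 3 := by ring
        linarith) F hF0 hFD R hR M1 hM1 hFR (fun m hm => (Finset.mem_filter.mp hm).2)
    have hx : (F.totalDegree : ℝ) ≤ D := by exact_mod_cast hFD
    have hRN : (R.card : ℝ) ≤ N := by exact_mod_cast (Finset.card_le_card hR).trans hL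
    have hMN : (M1.card : ℝ) ≤ N := by exact_mod_cast (Finset.card_le_card hM1).trans hM
    have c1 : 3 * (F.totalDegree : ℝ) * (R.card + M1.card) ≤ 3 * D * (N + N) := by gcongr
    have c2 : 42 * 20000000 * (F.totalDegree : ℝ) ^ 3 ≤ 42 * 20000000 * (D : ℝ) ^ 3 := by gcongr
    have c3 : (incN R M2 : ℝ) ≤ D * N := by exact_mod_cast b2
    rw [e]; push_cast
    rw [hW]
    linarith
  have hW0 : 0 ≤ W := by positivity
  have hfin := chunk hW0 hch 10000000000 L subset_rfl (by omega)
  have hWb : 10000000000 * W ≤ 20000000 * s ^ 3 := by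
    have d1 : (D : ℝ) * N ≤ s / 10000 * s ^ 2 := by rw [hs2]; gcongr
    have d2 : (D : ℝ) ^ 3 ≤ (s / 10000) ^ 3 := by gcongr
    have d3 : 0 ≤ s ^ 3 := by positivity
    rw [hW]
    ring_nf at d1 d2 ⊢
    linarith
  push_cast at hfin
  linarith

end RudnevAux


namespace RudnevAux

open Polynomial in
theorem six {F : Type*} [Field F] {a₀ a₁ a₂ a₃ a₄ a₅ : F}
    (h : C a₀ + C a₁ * X + C a₂ * X ^ 2 + C a₃ * X ^ 3 + C a₄ * X ^ 4 + C a₅ * X ^ 5 = (0 : F[X])) :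
    a₀ = 0 ∧ a₁ = 0 ∧ a₂ = 0 ∧ a₃ = 0 := by
  have h0 := congrArg (fun q => coeff q 0) h
  have h1 := congrArg (fun q => coeff q 1) h
  have h2 := congrArg (fun q => coeff q 2) h
  have h3 := congrArg (fun q => coeff q 3) h
  simp [coeff_X, coeff_C, coeff_X_pow] at h0 h1 h2 h3
  exact ⟨h0, h1, h2, h3⟩

section
variable {F K : Type*} [Field F] [Field K] (φ : Polynomial F →+* K)

/-- constants -/
noncomputable def cc (x : F) : K := φ (Polynomial.C x)

/-- the variable -/
noncomputable def tt : K := φ Polynomial.X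

theorem cc_add (x y : F) : cc φ (x + y) = cc φ x + cc φ y := by simp [cc]
theorem cc_sub (x y : F) : cc φ (x - y) = cc φ x - cc φ y := by simp [cc]
theorem cc_mul (x y : F) : cc φ (x * y) = cc φ x * cc φ y := by simp [cc]
theorem cc_neg (x : F) : cc φ (-x) = - cc φ x := by simp [cc]
theorem cc_zero : cc φ 0 = 0 := by simp [cc]
theorem cc_one : cc φ 1 = 1 := by simp [cc]

theorem cc_inj (hφ : Function.Injective φ) {x y : F} (h : cc φ x = cc φ y) : x = y :=
  Polynomial.C_injective (hφ h)

theorem six' (hφ : Function.Injective φ) {a₀ a₁ a₂ a₃ a₄ a₅ : F}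
    (h : cc φ a₀ + cc φ a₁ * tt φ + cc φ a₂ * tt φ ^ 2 + cc φ a₃ * tt φ ^ 3 + cc φ a₄ * tt φ ^ 4
      + cc φ a₅ * tt φ ^ 5 = 0) : a₀ = 0 ∧ a₁ = 0 ∧ a₂ = 0 ∧ a₃ = 0 := by
  refine six (a₄ := a₄) (a₅ := a₅) (hφ ?_)
  simpa [cc, tt] using h

/-- points to lines -/
noncomputable def lm (z : F × F × F) : K × K × K :=
  ((cc φ z.1 + tt φ * cc φ z.2.1 + tt φ ^ 2 * cc φ z.2.2) / (1 - tt φ ^ 3 * cc φ z.2.1),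
    cc φ z.2.1 / (1 - tt φ ^ 3 * cc φ z.2.1), - cc φ z.2.2 / (1 - tt φ ^ 3 * cc φ z.2.1))

/-- planes to lines -/
noncomputable def mm (z : F × F × F) : K × K × K :=
  ((cc φ z.1 + tt φ * cc φ z.2.1 + tt φ ^ 3 * cc φ z.2.2) / (1 - tt φ ^ 2 * cc φ z.2.1),
    cc φ z.2.1 / (1 - tt φ ^ 2 * cc φ z.2.1), - cc φ z.2.2 / (1 - tt φ ^ 2 * cc φ z.2.1))

theorem wL (hφ : Function.Injective φ) (c : F) : 1 - tt φ ^ 3 * cc φ c ≠ 0 := by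
  intro h
  have := six' φ hφ (a₀ := 1) (a₁ := 0) (a₂ := 0) (a₃ := -c) (a₄ := 0) (a₅ := 0) (by
    rw [cc_one, cc_zero, cc_neg]; linear_combination h)
  exact one_ne_zero this.1

theorem wM (hφ : Function.Injective φ) (c : F) : 1 - tt φ ^ 2 * cc φ c ≠ 0 := by
  intro h
  have := six' φ hφ (a₀ := 1) (a₁ := 0) (a₂ := -c) (a₃ := 0) (a₄ := 0) (a₅ := 0) (by
    rw [cc_one, cc_zero, cc_neg]; linear_combination h)
  exact one_ne_zero this.1

theorem lm_inj (hφ : Function.Injective φ) {z w : F × F × F} (h : (lm φ z).1 = (lm φ w).1) :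
    z = w := by
  obtain ⟨m, c, s⟩ := z
  obtain ⟨m', c', s'⟩ := w
  simp only [lm] at h
  rw [div_eq_div_iff (wL φ hφ _) (wL φ hφ _)] at h
  have := six' φ hφ (a₀ := m - m') (a₁ := c - c') (a₂ := s - s') (a₃ := - m * c' + m' * c)
    (a₄ := 0) (a₅ := - s * c' + s' * c) (by
      simp only [cc_add, cc_sub, cc_mul, cc_neg, cc_zero]
      linear_combination h)
  obtain ⟨h0, h1, h2, -⟩ := this
  rw [sub_eq_zero] at h0 h1 h2
  rw [h0, h1, h2]

theorem mm_inj (hφ : Function.Injective φ) {z w : F × F × F} (h : (mm φ z).1 = (mm φ w).1) :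
    z = w := by
  obtain ⟨m, c, s⟩ := z
  obtain ⟨m', c', s'⟩ := w
  simp only [mm] at h
  rw [div_eq_div_iff (wM φ hφ _) (wM φ hφ _)] at h
  have := six' φ hφ (a₀ := m - m') (a₁ := c - c') (a₂ := - m * c' + m' * c) (a₃ := s - s')
    (a₄ := 0) (a₅ := - s * c' + s' * c) (by
      simp only [cc_add, cc_sub, cc_mul, cc_neg, cc_zero]
      linear_combination h)
  obtain ⟨h0, h1, -, h2⟩ := this
  rw [sub_eq_zero] at h0 h1 h2
  rw [h0, h1, h2]

theorem inc_iff (hφ : Function.Injective φ) (z w : F × F × F)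
    (h : w.2.1 * z.1 + z.2.2 = z.2.1 * w.1 + w.2.2) : inc (lm φ z) (mm φ w) := by
  obtain ⟨m, c', s⟩ := z
  obtain ⟨m', c, s'⟩ := w
  simp only at h
  have h' := congrArg (cc φ) h
  simp only [cc_add, cc_mul] at h'
  have h1 := wL φ hφ c'
  have h2 := wM φ hφ c
  simp only [inc, lm, mm]
  rw [div_mul_div_comm, div_mul_div_comm, div_add_div _ _ (mul_ne_zero h1 h2) h1,
    div_add_div _ _ (mul_ne_zero h2 h1) h2, div_eq_div_iff (by positivity) (by positivity)]
  linear_combination (-((1 - tt φ ^ 3 * cc φ c')^2 * (1 - tt φ ^ 2 * cc φ c)^2)) * h'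

theorem VV (hφ : Function.Injective φ) {a b c : F}
    (h : cc φ a + tt φ * cc φ b + tt φ ^ 3 * cc φ c = 0) : a = 0 ∧ b = 0 ∧ c = 0 := by
  have := six' φ hφ (a₀ := a) (a₁ := b) (a₂ := 0) (a₃ := c) (a₄ := 0) (a₅ := 0) (by
    rw [cc_zero]; linear_combination h)
  exact ⟨this.1, this.2.1, this.2.2.2⟩

theorem collinear (hφ : Function.Injective φ) {Z : Set (F × F × F)} {α β γ δ : K}
    (h : ∀ z ∈ Z, (mm φ z).2.1 = α * (mm φ z).1 + β ∧ (mm φ z).2.2 = γ * (mm φ z).1 + δ) :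
    Set.InjOn (fun z : F × F × F => z.1) Z ∨ Set.InjOn (fun z : F × F × F => z.2.1) Z ∨
      Set.InjOn (fun z : F × F × F => z.2.2) Z := by
  have key : ∀ z ∈ Z, cc φ z.2.1 = α * (cc φ z.1 + tt φ * cc φ z.2.1 + tt φ ^ 3 * cc φ z.2.2)
        + β * (1 - tt φ ^ 2 * cc φ z.2.1) ∧
      - cc φ z.2.2 = γ * (cc φ z.1 + tt φ * cc φ z.2.1 + tt φ ^ 3 * cc φ z.2.2)
        + δ * (1 - tt φ ^ 2 * cc φ z.2.1) := by
    intro z hz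
    obtain ⟨h1, h2⟩ := h z hz
    have hw := wM φ hφ z.2.1
    simp only [mm] at h1 h2
    rw [div_eq_iff hw] at h1 h2
    have hv := div_mul_cancel₀ (cc φ z.1 + tt φ * cc φ z.2.1 + tt φ ^ 3 * cc φ z.2.2) hw
    constructor
    · linear_combination h1 + α * hv
    · linear_combination h2 + γ * hv
  by_cases hsub : Z.Subsingleton
  · left; exact hsub.injOn _
  rw [Set.not_subsingleton_iff] at hsub
  obtain ⟨z₀, hz₀, z₁, hz₁, hne⟩ := hsub
  obtain ⟨a0, b0⟩ := key z₀ hz₀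
  obtain ⟨a1, b1⟩ := key z₁ hz₁
  -- difference direction
  set V : F × F × F → K := fun z => cc φ z.1 + tt φ * cc φ z.2.1 + tt φ ^ 3 * cc φ z.2.2 with hV
  have hVne : V z₁ - V z₀ ≠ 0 := by
    intro h0
    obtain ⟨e1, e2, e3⟩ := VV φ hφ (a := z₁.1 - z₀.1) (b := z₁.2.1 - z₀.2.1)
      (c := z₁.2.2 - z₀.2.2) (by
        simp only [cc_sub]
        simp only [hV] at h0
        linear_combination h0)
    rw [sub_eq_zero] at e1 e2 e3
    exact hne (Prod.ext e1.symm (Prod.ext e2.symm e3.symm))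
  have hβ : 1 + β * tt φ ^ 2 ≠ 0 := by
    intro h0
    have hα : α * (V z₁ - V z₀) = 0 := by
      simp only [hV]
      linear_combination a0 - a1 + (cc φ z₁.2.1 - cc φ z₀.2.1) * h0
    have hα0 : α = 0 := (mul_eq_zero.mp hα).resolve_right hVne
    have hβ0 : β = 0 := by
      rw [hα0] at a0
      linear_combination (cc φ z₀.2.1) * h0 - a0
    rw [hβ0] at h0
    simp at h0
  have main : ∀ z ∈ Z, ∀ w ∈ Z,
      (V z₁ - V z₀) * (cc φ w.2.1 - cc φ z.2.1) = (V w - V z) * (cc φ z₁.2.1 - cc φ z₀.2.1) ∧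
      (V z₁ - V z₀) * (cc φ w.2.2 - cc φ z.2.2) = (V w - V z) * (cc φ z₁.2.2 - cc φ z₀.2.2) ∧
      (V z₁ - V z₀) * (cc φ w.1 - cc φ z.1) = (V w - V z) * (cc φ z₁.1 - cc φ z₀.1) := by
    intro z hz w hw
    obtain ⟨az, bz⟩ := key z hz
    obtain ⟨aw, bw⟩ := key w hw
    have m1 : (V z₁ - V z₀) * (cc φ w.2.1 - cc φ z.2.1)
        = (V w - V z) * (cc φ z₁.2.1 - cc φ z₀.2.1) := by
      apply mul_left_cancel₀ hβ
      linear_combination (V z₁ - V z₀) * (aw - az) - (V w - V z) * (a1 - a0)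
    have m2 : (V z₁ - V z₀) * (cc φ w.2.2 - cc φ z.2.2)
        = (V w - V z) * (cc φ z₁.2.2 - cc φ z₀.2.2) := by
      linear_combination (-(V z₁ - V z₀)) * (bw - bz) + (V w - V z) * (b1 - b0)
        + δ * tt φ ^ 2 * m1
    refine ⟨m1, m2, ?_⟩
    have e : ∀ z : F × F × F, cc φ z.1 = V z - tt φ * cc φ z.2.1 - tt φ ^ 3 * cc φ z.2.2 := by
      intro z; simp only [hV]; ring
    rw [e w, e z, e z₁, e z₀]
    linear_combination (-tt φ) * m1 - tt φ ^ 3 * m2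
  have fin : ∀ z w : F × F × F, V w - V z = 0 → z = w := by
    intro z w h0
    obtain ⟨e1, e2, e3⟩ := VV φ hφ (a := w.1 - z.1) (b := w.2.1 - z.2.1)
      (c := w.2.2 - z.2.2) (by
        simp only [cc_sub]
        simp only [hV] at h0
        linear_combination h0)
    rw [sub_eq_zero] at e1 e2 e3
    exact (Prod.ext e1.symm (Prod.ext e2.symm e3.symm))
  by_cases c1 : z₁.1 = z₀.1
  · by_cases c2 : z₁.2.1 = z₀.2.1
    · have c3 : z₁.2.2 ≠ z₀.2.2 := fun c3 => hne (Prod.ext c1.symm (Prod.ext c2.symm c3.symm))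
      right; right
      intro z hz w hw hzw
      simp only at hzw
      have := (main z hz w hw).2.1
      rw [hzw, sub_self, mul_zero] at this
      exact fin z w ((mul_eq_zero.mp this.symm).resolve_right
        (fun h0 => c3 (cc_inj φ hφ (sub_eq_zero.mp h0))))
    · right; left
      intro z hz w hw hzw
      simp only at hzw
      have := (main z hz w hw).1
      rw [hzw, sub_self, mul_zero] at this
      exact fin z w ((mul_eq_zero.mp this.symm).resolve_right
        (fun h0 => c2 (cc_inj φ hφ (sub_eq_zero.mp h0))))
  · left
    intro z hz w hw hzw
    simp only at hzw
    have := (main z hz w hw).2.2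
    rw [hzw, sub_self, mul_zero] at this
    exact fin z w ((mul_eq_zero.mp this.symm).resolve_right
      (fun h0 => c1 (cc_inj φ hφ (sub_eq_zero.mp h0))))

end

theorem incidence_Fp {p : ℕ} [Fact p.Prime] (P Q S : Finset (ZMod p)) {N : ℕ}
    (hN : P.card * (Q.card * S.card) ≤ N) (hNp : N ≤ p ^ 2) :
    ((((P ×ˢ (Q ×ˢ S)) ×ˢ (P ×ˢ (Q ×ˢ S))).filter
      (fun q => q.2.2.1 * q.1.1 + q.1.2.2 = q.1.2.1 * q.2.1 + q.2.2.2)).card : ℝ)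
    ≤ 20000000 * Real.sqrt N ^ 3 + ((P.card + Q.card + S.card : ℕ) : ℝ) * N := by
  classical
  set K := FractionRing (Polynomial (ZMod p))
  set φ : Polynomial (ZMod p) →+* K := algebraMap _ _ with hφd
  have hφ : Function.Injective φ := IsFractionRing.injective _ _
  have : CharP K p := charP_of_injective_ringHom hφ p
  have : Infinite K := Infinite.of_injective φ hφ
  set T := P ×ˢ (Q ×ˢ S) with hT
  have hTc : T.card ≤ N := by rw [hT, Finset.card_product, Finset.card_product]; exact hN
  have hlm : Function.Injective (lm φ) := fun z w h => lm_inj φ hφ (by rw [h])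
  have hmm : Function.Injective (mm φ) := fun z w h => mm_inj φ hφ (by rw [h])
  have hmain := incidence (K := K) (p := p) (k := P.card + Q.card + S.card) N
    (T.image (lm φ)) (T.image (mm φ)) hNp (Finset.card_image_le.trans hTc)
    (Finset.card_image_le.trans hTc)
    (by
      intro x hx y hy hxy
      rw [Finset.mem_coe, Finset.mem_image] at hx hy
      obtain ⟨z, _, rfl⟩ := hx
      obtain ⟨w, _, rfl⟩ := hy
      rw [lm_inj φ hφ hxy])
    (by
      intro x hx y hy hxy
      rw [Finset.mem_coe, Finset.mem_image] at hx hy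
      obtain ⟨z, _, rfl⟩ := hx
      obtain ⟨w, _, rfl⟩ := hy
      rw [mm_inj φ hφ hxy])
    (by
      intro α β γ δ G' hG' h
      set Z := T.filter (fun z => mm φ z ∈ G') with hZ
      have hGZ : G' ⊆ Z.image (mm φ) := by
        intro x hx
        obtain ⟨z, hz, rfl⟩ := Finset.mem_image.mp (hG' hx)
        exact Finset.mem_image_of_mem _ (Finset.mem_filter.mpr ⟨hz, hx⟩)
      refine (Finset.card_le_card hGZ).trans (Finset.card_image_le.trans ?_)
      have hZT : ∀ z ∈ Z, z.1 ∈ P ∧ z.2.1 ∈ Q ∧ z.2.2 ∈ S := by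
        intro z hz
        have := (Finset.mem_filter.mp hz).1
        rw [hT, Finset.mem_product, Finset.mem_product] at this
        exact this
      rcases collinear φ hφ (Z := (Z : Set (ZMod p × ZMod p × ZMod p)))
        (fun z hz => h _ (Finset.mem_filter.mp hz).2) with h1 | h1 | h1
      · have := Finset.card_le_card_of_injOn _ (fun z hz => (hZT z hz).1) h1
        omega
      · have := Finset.card_le_card_of_injOn _ (fun z hz => (hZT z hz).2.1) h1
        omega
      · have := Finset.card_le_card_of_injOn _ (fun z hz => (hZT z hz).2.2) h1
        omega)
  have h1 : ((T ×ˢ T).filter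
      (fun q => q.2.2.1 * q.1.1 + q.1.2.2 = q.1.2.1 * q.2.1 + q.2.2.2)).card
      ≤ incN (T.image (lm φ)) (T.image (mm φ)) := by
    refine Finset.card_le_card_of_injOn (fun q => (lm φ q.1, mm φ q.2)) ?_ ?_
    · intro q hq
      rw [Finset.mem_coe, Finset.mem_filter, Finset.mem_product] at hq
      rw [Finset.mem_coe, Finset.mem_filter, Finset.mem_product]
      exact ⟨⟨Finset.mem_image_of_mem _ hq.1.1, Finset.mem_image_of_mem _ hq.1.2⟩,
        inc_iff φ hφ _ _ hq.2⟩
    · intro q _ r _ h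
      simp only [Prod.mk.injEq] at h
      exact Prod.ext (hlm h.1) (hmm h.2)
  have h2 : ((P.card + Q.card + S.card : ℕ) : ℝ) * ((T.image (lm φ)).card : ℝ)
      ≤ ((P.card + Q.card + S.card : ℕ) : ℝ) * N := by
    have : ((T.image (lm φ)).card : ℝ) ≤ N := by exact_mod_cast Finset.card_image_le.trans hTc
    gcongr
  have h3 : (((T ×ˢ T).filter
      (fun q => q.2.2.1 * q.1.1 + q.1.2.2 = q.1.2.1 * q.2.1 + q.2.2.2)).card : ℝ)
      ≤ incN (T.image (lm φ)) (T.image (mm φ)) := by exact_mod_cast h1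
  linarith

end RudnevAux


namespace RudnevAux

theorem card_pairs {α G : Type*} [Fintype G] [DecidableEq G] (s : Finset α) (h : α → G) :
    (((s ×ˢ s).filter (fun q => h q.1 = h q.2)).card : ℝ)
      = ∑ x, ((s.filter (fun g => h g = x)).card : ℝ) ^ 2 := by
  classical
  rw [Finset.card_eq_sum_card_fiberwise (f := fun q => h q.1) (t := Finset.univ) (by simp)]
  push_cast
  refine Finset.sum_congr rfl (fun x _ => ?_)
  have : ((s ×ˢ s).filter (fun q => h q.1 = h q.2)).filter (fun q => h q.1 = x)
      = (s.filter (fun g => h g = x)) ×ˢ (s.filter (fun g => h g = x)) := by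
    ext ⟨a, b⟩
    simp only [Finset.mem_filter, Finset.mem_product]
    constructor
    · rintro ⟨⟨⟨h1, h2⟩, h3⟩, h4⟩
      exact ⟨⟨h1, h4⟩, h2, by rw [← h3, h4]⟩
    · rintro ⟨⟨h1, h4⟩, h2, h3⟩
      exact ⟨⟨⟨h1, h2⟩, by rw [h4, h3]⟩, h4⟩
  rw [this, Finset.card_product]
  push_cast
  ring

section
variable {G : Type*} [AddCommGroup G] [Fintype G] [DecidableEq G]

/-- convolution with the indicator -/
def conv (A : Finset G) (f : G → ℝ) (y : G) : ℝ := ∑ a ∈ A, f (y - a)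

/-- representation function -/
def rep (j : ℕ) (A : Finset G) (x : G) : ℝ :=
  (((Fintype.piFinset fun _ : Fin j => A).filter (fun g => ∑ i, g i = x)).card : ℝ)

theorem sum_rep (j : ℕ) (A : Finset G) : ∑ x, rep j A x = (A.card : ℝ) ^ j := by
  have h := Finset.card_eq_sum_card_fiberwise (s := Fintype.piFinset fun _ : Fin j => A)
    (f := fun g => ∑ i, g i) (t := Finset.univ) (by simp)
  rw [Fintype.card_piFinset_const, ] at h
  simp only [rep]
  rw [← Nat.cast_pow, h]
  push_cast
  rfl

theorem rep_succ (j : ℕ) (A : Finset G) (y : G) : rep (j + 1) A y = conv A (rep j A) y := by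
  simp only [rep, conv]
  rw [Finset.card_eq_sum_card_fiberwise (f := fun g => g 0) (t := A) (by
    intro g hg
    rw [Finset.mem_coe, Finset.mem_filter, Fintype.mem_piFinset] at hg
    exact hg.1 0)]
  push_cast
  refine Finset.sum_congr rfl (fun a ha => ?_)
  congr 1
  refine Finset.card_nbij' (fun g => Fin.tail g) (fun g => Fin.cons a g) ?_ ?_ ?_ ?_
  · intro g hg
    simp only [Finset.mem_coe, Finset.mem_filter, Fintype.mem_piFinset, Fin.sum_univ_succ] at hg ⊢
    obtain ⟨⟨h1, h2⟩, h3⟩ := hg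
    refine ⟨fun i => h1 i.succ, ?_⟩
    rw [← h2, ← h3]
    simp [Fin.tail]
  · intro g hg
    simp only [Finset.mem_coe, Finset.mem_filter, Fintype.mem_piFinset, Fin.sum_univ_succ] at hg ⊢
    refine ⟨⟨?_, ?_⟩, ?_⟩
    · intro i
      refine Fin.cases ?_ (fun i => ?_) i
      · simpa using ha
      · simpa using hg.1 i
    · simp [hg.2]
    · simp
  · intro g hg
    simp only [Finset.mem_coe, Finset.mem_filter] at hg
    rw [← hg.2]
    exact Fin.cons_self_tail g
  · intro g _
    simp

theorem rep_support (j : ℕ) (A : Finset G) : ∀ x, rep j A x ≠ 0 → x ∈ j • A := by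
  induction j with
  | zero =>
    intro x hx
    simp only [rep, ne_eq, Nat.cast_eq_zero, Finset.card_eq_zero] at hx
    obtain ⟨g, hg⟩ := Finset.nonempty_iff_ne_empty.mpr hx
    rw [Finset.mem_filter] at hg
    rw [zero_nsmul, Finset.mem_zero, ← hg.2]
    simp
  | succ j ih =>
    intro x hx
    rw [rep_succ, conv] at hx
    obtain ⟨a, ha, h⟩ := Finset.exists_ne_zero_of_sum_ne_zero hx
    rw [succ_nsmul]
    have := Finset.add_mem_add (ih _ h) ha
    simpa using this

theorem conv_indicator (A S : Finset G) (y : G) :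
    conv A (fun x => if x ∈ S then 1 else 0) y
      = ((A ×ˢ S).filter (fun q => q.1 + q.2 = y)).card := by
  rw [conv, Finset.card_filter, Finset.sum_product]
  push_cast
  refine Finset.sum_congr rfl (fun a _ => ?_)
  have h : ∀ s, (a + s = y) ↔ (y - a = s) := by
    intro s
    constructor
    · intro h; rw [← h]; abel
    · intro h; rw [← h]; abel
  simp only [h]
  rw [Finset.sum_ite_eq]

/-- additive energy -/
noncomputable def EE (A S : Finset G) : ℝ :=
  ((((A ×ˢ S) ×ˢ (A ×ˢ S)).filter (fun q => q.1.1 + q.1.2 = q.2.1 + q.2.2)).card : ℝ)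

theorem EE_eq (A S : Finset G) :
    EE A S = ∑ y, conv A (fun x => if x ∈ S then 1 else 0) y ^ 2 := by
  simp only [conv_indicator]
  exact card_pairs (A ×ˢ S) (fun q => q.1 + q.2)

theorem conv_sq_le (A : Finset G) (f : G → ℝ) :
    ∑ y, conv A f y ^ 2 ≤ (A.card : ℝ) ^ 2 * ∑ x, f x ^ 2 := by
  have h1 : ∀ y, conv A f y ^ 2 ≤ A.card * ∑ a ∈ A, f (y - a) ^ 2 := fun y => by
    exact sq_sum_le_card_mul_sum_sq
  calc ∑ y, conv A f y ^ 2 ≤ ∑ y, (A.card : ℝ) * ∑ a ∈ A, f (y - a) ^ 2 :=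
        Finset.sum_le_sum (fun y _ => h1 y)
    _ = A.card * ∑ a ∈ A, ∑ y, f (y - a) ^ 2 := by
        rw [← Finset.mul_sum, Finset.sum_comm]
    _ = A.card * ∑ a ∈ A, ∑ x, f x ^ 2 := by
        congr 1
        refine Finset.sum_congr rfl (fun a _ => ?_)
        exact Equiv.sum_comp (Equiv.subRight a) (fun x => f x ^ 2)
    _ = _ := by rw [Finset.sum_const, nsmul_eq_mul]; ring

theorem dyadic_pt {τ : ℝ} (hτ : 0 ≤ τ) {r : ℝ} (J : ℕ) (hr : r < 2 ^ J * τ) :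
    r ≤ (if r < τ then r else 0) + ∑ i ∈ Finset.range J, 2 * (2 ^ i * τ) *
      (if 2 ^ i * τ ≤ r ∧ r < 2 ^ (i + 1) * τ then 1 else 0) := by
  induction J with
  | zero =>
    have : r < τ := by simpa using hr
    simp [this]
  | succ J ih =>
    have hnn : ∀ i, 0 ≤ 2 * (2 ^ i * τ) *
      (if 2 ^ i * τ ≤ r ∧ r < 2 ^ (i + 1) * τ then (1 : ℝ) else 0) := by
      intro i
      split_ifs <;> positivity
    rw [Finset.sum_range_succ]
    by_cases h : r < 2 ^ J * τ
    · have := ih h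
      have := hnn J
      linarith
    · push Not at h
      have h2 : τ ≤ r := le_trans (le_mul_of_one_le_left hτ (one_le_pow₀ (by norm_num))) h
      rw [if_neg (not_lt.mpr h2), if_pos ⟨h, hr⟩]
      have := Finset.sum_nonneg (s := Finset.range J) (fun i _ => hnn i)
      have e : (2 : ℝ) ^ (J + 1) * τ = 2 * (2 ^ J * τ) := by ring
      rw [e] at hr
      linarith

theorem conv_mono (A : Finset G) {f g : G → ℝ} (h : ∀ x, f x ≤ g x) (y : G) :
    conv A f y ≤ conv A g y := Finset.sum_le_sum (fun _ _ => h _)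

theorem dyadic (A : Finset G) (r : G → ℝ) (hr0 : ∀ x, 0 ≤ r x) {τ : ℝ} (hτ : 0 ≤ τ) (J : ℕ)
    (hr : ∀ x, r x < 2 ^ J * τ) :
    ∑ y, conv A r y ^ 2 ≤ 2 * ((A.card : ℝ) ^ 2 * (τ * ∑ x, r x)) +
      8 * J * ∑ i ∈ Finset.range J, (2 ^ i * τ) ^ 2 *
        EE A (Finset.univ.filter (fun x => 2 ^ i * τ ≤ r x ∧ r x < 2 ^ (i + 1) * τ)) := by
  set S : ℕ → Finset G := fun i =>
    Finset.univ.filter (fun x => 2 ^ i * τ ≤ r x ∧ r x < 2 ^ (i + 1) * τ) with hS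
  set lo : G → ℝ := fun x => if r x < τ then r x else 0 with hlo
  have hpt : ∀ y, conv A r y ≤ conv A lo y + ∑ i ∈ Finset.range J, 2 * (2 ^ i * τ) *
      conv A (fun x => if x ∈ S i then 1 else 0) y := by
    intro y
    refine (conv_mono A (fun x => dyadic_pt hτ J (hr x)) y).trans (le_of_eq ?_)
    simp only [conv, Finset.sum_add_distrib, hlo, hS, Finset.mem_filter, Finset.mem_univ, true_and]
    congr 1
    rw [Finset.sum_comm]
    refine Finset.sum_congr rfl (fun i _ => ?_)
    rw [Finset.mul_sum]
  have hc0 : ∀ y, 0 ≤ conv A r y := fun y => Finset.sum_nonneg (fun _ _ => hr0 _)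
  have hsq : ∀ y, conv A r y ^ 2 ≤ 2 * conv A lo y ^ 2 + 8 * J * ∑ i ∈ Finset.range J,
      (2 ^ i * τ) ^ 2 * conv A (fun x => if x ∈ S i then 1 else 0) y ^ 2 := by
    intro y
    have h1 := pow_le_pow_left₀ (hc0 y) (hpt y) 2
    set B := ∑ i ∈ Finset.range J, 2 * (2 ^ i * τ) *
      conv A (fun x => if x ∈ S i then 1 else 0) y
    have h2 : B ^ 2 ≤ J * ∑ i ∈ Finset.range J, (2 * (2 ^ i * τ) *
      conv A (fun x => if x ∈ S i then 1 else 0) y) ^ 2 := by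
      have := sq_sum_le_card_mul_sum_sq (s := Finset.range J) (f := fun i => 2 * (2 ^ i * τ) *
        conv A (fun x => if x ∈ S i then 1 else 0) y)
      rwa [Finset.card_range] at this
    have h3 : ∑ i ∈ Finset.range J, (2 * (2 ^ i * τ) *
      conv A (fun x => if x ∈ S i then 1 else 0) y) ^ 2 = 4 * ∑ i ∈ Finset.range J,
      (2 ^ i * τ) ^ 2 * conv A (fun x => if x ∈ S i then 1 else 0) y ^ 2 := by
      rw [Finset.mul_sum]
      refine Finset.sum_congr rfl (fun i _ => by ring)
    rw [h3] at h2
    nlinarith [sq_nonneg (conv A lo y - B)]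
  have hlo2 : ∑ x, lo x ^ 2 ≤ τ * ∑ x, r x := by
    rw [Finset.mul_sum]
    refine Finset.sum_le_sum (fun x _ => ?_)
    simp only [hlo]
    split_ifs with h
    · nlinarith [hr0 x]
    · have := mul_nonneg hτ (hr0 x); simpa using this
  calc ∑ y, conv A r y ^ 2 ≤ ∑ y, (2 * conv A lo y ^ 2 + 8 * J * ∑ i ∈ Finset.range J,
      (2 ^ i * τ) ^ 2 * conv A (fun x => if x ∈ S i then 1 else 0) y ^ 2) :=
        Finset.sum_le_sum (fun y _ => hsq y)
    _ = 2 * ∑ y, conv A lo y ^ 2 + 8 * J * ∑ i ∈ Finset.range J, (2 ^ i * τ) ^ 2 * EE A (S i) := by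
        rw [Finset.sum_add_distrib, ← Finset.mul_sum, ← Finset.mul_sum, Finset.sum_comm]
        congr 2
        refine Finset.sum_congr rfl (fun i _ => ?_)
        rw [EE_eq, Finset.mul_sum]
    _ ≤ _ := by
        have := (conv_sq_le A lo).trans (mul_le_mul_of_nonneg_left hlo2 (by positivity))
        linarith

end

end RudnevAux


namespace RudnevAux

theorem energy_card {p : ℕ} [Fact p.Prime] (A S : Finset (ZMod p)) :
    EE A S * ((A.erase 0).card : ℝ) ^ 2 ≤
    (((((A * A) ×ˢ (((A.erase 0).image (fun b => b⁻¹)) ×ˢ S)) ×ˢ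
      ((A * A) ×ˢ (((A.erase 0).image (fun b => b⁻¹)) ×ˢ S))).filter
      (fun q => q.2.2.1 * q.1.1 + q.1.2.2 = q.1.2.1 * q.2.1 + q.2.2.2)).card : ℝ) := by
  set A' := A.erase 0 with hA'
  have h : ((((A ×ˢ S) ×ˢ (A ×ˢ S)).filter (fun q => q.1.1 + q.1.2 = q.2.1 + q.2.2))
      ×ˢ (A' ×ˢ A')).card ≤ ((((A * A) ×ˢ ((A'.image (fun b => b⁻¹)) ×ˢ S)) ×ˢ
      ((A * A) ×ˢ ((A'.image (fun b => b⁻¹)) ×ˢ S))).filter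
      (fun q => q.2.2.1 * q.1.1 + q.1.2.2 = q.1.2.1 * q.2.1 + q.2.2.2)).card := by
    refine Finset.card_le_card_of_injOn (fun w =>
      ((w.1.1.1 * w.2.1, w.2.2⁻¹, w.1.1.2), (w.1.2.1 * w.2.2, w.2.1⁻¹, w.1.2.2))) ?_ ?_
    · rintro ⟨⟨⟨a, s⟩, ⟨a', s'⟩⟩, ⟨b, b'⟩⟩ hw
      simp only [Finset.mem_coe, Finset.mem_product, Finset.mem_filter] at hw ⊢
      obtain ⟨⟨⟨⟨ha, hs⟩, ha', hs'⟩, he⟩, hb, hb'⟩ := hw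
      have hb1 := Finset.mem_erase.mp hb
      have hb1' := Finset.mem_erase.mp hb'
      refine ⟨⟨⟨Finset.mul_mem_mul ha hb1.2, Finset.mem_image_of_mem _ hb', hs⟩,
        Finset.mul_mem_mul ha' hb1'.2, Finset.mem_image_of_mem _ hb, hs'⟩, ?_⟩
      have e1 : b⁻¹ * (a * b) = a := by field_simp [hb1.1]
      have e2 : b'⁻¹ * (a' * b') = a' := by field_simp [hb1'.1]
      rw [e1, e2, he]
    · rintro ⟨⟨⟨a, s⟩, ⟨a', s'⟩⟩, ⟨b, b'⟩⟩ hw ⟨⟨⟨c, t⟩, ⟨c', t'⟩⟩, ⟨d, d'⟩⟩ _ heq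
      simp only [Finset.mem_coe, Finset.mem_product, Finset.mem_filter] at hw
      obtain ⟨-, hb, hb'⟩ := hw
      have hb1 := Finset.mem_erase.mp hb
      have hb1' := Finset.mem_erase.mp hb'
      simp only [Prod.mk.injEq] at heq
      obtain ⟨⟨h1, h2, h3⟩, h4, h5, h6⟩ := heq
      have h2' := inv_injective h2
      have h5' := inv_injective h5
      subst h2' h5' h3 h6
      have h1' := mul_right_cancel₀ hb1.1 h1
      have h4' := mul_right_cancel₀ hb1'.1 h4
      subst h1' h4'
      rfl
  rw [Finset.card_product, Finset.card_product] at h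
  rw [EE, sq]
  exact_mod_cast h

theorem card_le_mul {p : ℕ} [Fact p.Prime] (A : Finset (ZMod p)) (h : 2 ≤ A.card) :
    A.card ≤ (A * A).card := by
  have h1 : 0 < (A.erase 0).card := by
    have := Finset.pred_card_le_card_erase (s := A) (a := 0)
    omega
  obtain ⟨b, hb⟩ := Finset.card_pos.mp h1
  rw [Finset.mem_erase] at hb
  refine Finset.card_le_card_of_injOn (fun a => a * b) (fun a ha => Finset.mul_mem_mul ha hb.2) ?_
  intro x _ y _ hxy
  exact mul_right_cancel₀ hb.1 hxy

theorem energy_num {x y z w E Δ T R : ℝ} (hE0 : 0 ≤ E) (hx0 : 0 ≤ x) (hz0 : 0 ≤ z)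
    (hy0 : 0 < y) (hw0 : 0 < w) (hΔ : 0 ≤ Δ) (hR0 : 0 ≤ R) (hyx : y ^ 2 ≤ x ^ 2)
    (hwy : w ^ 2 ≤ 2 * y ^ 2) (hT : Δ ^ 2 * z ^ 2 ≤ T) (hR : Δ * z ^ 2 ≤ R)
    (e3 : E * (y ^ 2) ^ 2 ≤ 20000000 * (x * y * z) ^ 3
      + (x ^ 2 + y ^ 2 + z ^ 2) * (x ^ 2 * (y ^ 2 * z ^ 2))) :
    Δ ^ 2 * E ≤ 100000000 * (R * Real.sqrt T * x ^ 3 / w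
      + R ^ 2 / w ^ 2 * x ^ 2 + T * (x ^ 2) ^ 2 / w ^ 2) := by
  have e4 : E * y ^ 4 ≤ 20000000 * (x * y * z) ^ 3
      + (2 * x ^ 2 + z ^ 2) * (x ^ 2 * (y ^ 2 * z ^ 2)) := by
    have : (x ^ 2 + y ^ 2 + z ^ 2) * (x ^ 2 * (y ^ 2 * z ^ 2)) ≤
      (2 * x ^ 2 + z ^ 2) * (x ^ 2 * (y ^ 2 * z ^ 2)) := by
      apply mul_le_mul_of_nonneg_right _ (by positivity)
      linarith
    nlinarith
  have e5 : E * y ^ 2 ≤ 20000000 * (x ^ 3 * z ^ 3 * y) + 2 * x ^ 4 * z ^ 2 + x ^ 2 * z ^ 4 := by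
    have : y ^ 2 * (E * y ^ 2) ≤ y ^ 2 *
        (20000000 * (x ^ 3 * z ^ 3 * y) + 2 * x ^ 4 * z ^ 2 + x ^ 2 * z ^ 4) := by
      linarith
    exact le_of_mul_le_mul_left this (by positivity)
  have hT0 : 0 ≤ T := le_trans (by positivity) hT
  set q := Real.sqrt T with hq
  have hq2 : T = q ^ 2 := (Real.sq_sqrt hT0).symm
  have hq0 : 0 ≤ q := Real.sqrt_nonneg _
  have hΔz : Δ * z ≤ q := by
    refine le_of_sq_le_sq ?_ hq0
    rw [← hq2]; linarith
  have f1 : Δ ^ 2 * z ^ 3 ≤ q * R := by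
    calc Δ ^ 2 * z ^ 3 = (Δ * z) * (Δ * z ^ 2) := by ring
      _ ≤ q * R := by gcongr
  have f2 : Δ ^ 2 * z ^ 4 ≤ R ^ 2 := by
    calc Δ ^ 2 * z ^ 4 = (Δ * z ^ 2) ^ 2 := by ring
      _ ≤ R ^ 2 := by gcongr
  have e6 : Δ ^ 2 * E * y ^ 2 ≤ 20000000 * (x ^ 3 * (q * R) * y) + 2 * x ^ 4 * T
      + x ^ 2 * R ^ 2 := by
    calc Δ ^ 2 * E * y ^ 2 = Δ ^ 2 * (E * y ^ 2) := by ring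
      _ ≤ Δ ^ 2 * (20000000 * (x ^ 3 * z ^ 3 * y) + 2 * x ^ 4 * z ^ 2 + x ^ 2 * z ^ 4) := by gcongr
      _ = 20000000 * (x ^ 3 * (Δ ^ 2 * z ^ 3) * y) + 2 * x ^ 4 * (Δ ^ 2 * z ^ 2)
        + x ^ 2 * (Δ ^ 2 * z ^ 4) := by ring
      _ ≤ _ := by gcongr
  have e7 : Δ ^ 2 * E ≤ 20000000 * (x ^ 3 * (q * R) / y) + 2 * x ^ 4 * T / y ^ 2
      + x ^ 2 * R ^ 2 / y ^ 2 := by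
    have : (20000000 * (x ^ 3 * (q * R) / y) + 2 * x ^ 4 * T / y ^ 2
      + x ^ 2 * R ^ 2 / y ^ 2) = (20000000 * (x ^ 3 * (q * R) * y) + 2 * x ^ 4 * T
      + x ^ 2 * R ^ 2) / y ^ 2 := by field_simp
    rw [this, le_div_iff₀ (by positivity)]
    exact e6
  have i1 : ∀ c : ℝ, 0 ≤ c → c / y ^ 2 ≤ 2 * (c / w ^ 2) := by
    intro c hc
    rw [← mul_div_assoc, div_le_div_iff₀ (by positivity) (by positivity)]
    nlinarith
  have i2 : ∀ c : ℝ, 0 ≤ c → c / y ≤ 2 * (c / w) := by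
    intro c hc
    have hwy' : w ≤ 2 * y := by
      refine le_of_sq_le_sq ?_ (by positivity)
      nlinarith [sq_nonneg y]
    rw [← mul_div_assoc, div_le_div_iff₀ (by positivity) (by positivity)]
    nlinarith
  have g1 := i2 (x ^ 3 * (q * R)) (by positivity)
  have g2 := i1 (2 * x ^ 4 * T) (by positivity)
  have g3 := i1 (x ^ 2 * R ^ 2) (by positivity)
  have r1 : R * q * x ^ 3 / w = x ^ 3 * (q * R) / w := by ring
  have r2 : R ^ 2 / w ^ 2 * x ^ 2 = x ^ 2 * R ^ 2 / w ^ 2 := by ring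
  have r3 : T * (x ^ 2) ^ 2 / w ^ 2 = (2 * x ^ 4 * T / w ^ 2) / 2 := by ring
  rw [r1, r2, r3]
  have p1 : 0 ≤ x ^ 3 * (q * R) / w := by positivity
  have p2 : 0 ≤ x ^ 2 * R ^ 2 / w ^ 2 := by positivity
  have p3 : 0 ≤ 2 * x ^ 4 * T / w ^ 2 := by positivity
  linarith

theorem energy_bound {p : ℕ} [Fact p.Prime] (A S : Finset (ZMod p)) (h2 : 2 ≤ A.card)
    (hp : A.card * S.card * (A * A).card ≤ p ^ 2) {Δ T R : ℝ} (hΔ : 0 ≤ Δ) (hR0 : 0 ≤ R)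
    (hT : Δ ^ 2 * S.card ≤ T) (hR : Δ * S.card ≤ R) :
    Δ ^ 2 * EE A S ≤ 100000000 * (R * Real.sqrt T * Real.sqrt (A * A).card ^ 3 / Real.sqrt A.card
      + R ^ 2 / A.card * (A * A).card + T * ((A * A).card : ℝ) ^ 2 / A.card) := by
  set A' := A.erase 0 with hA'
  have ha1 : A.card ≤ 2 * A'.card := by
    have := Finset.pred_card_le_card_erase (s := A) (a := 0)
    rw [← hA'] at this
    omega
  have ha2 : A'.card ≤ A.card := Finset.card_le_card (Finset.erase_subset _ _)
  have hAA := card_le_mul A h2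
  have hQc : (A'.image (fun b => b⁻¹)).card = A'.card :=
    Finset.card_image_of_injective _ inv_injective
  have e1 := energy_card A S
  have e2 := incidence_Fp (A * A) (A'.image (fun b => b⁻¹)) S
    (N := (A * A).card * (A'.card * S.card)) (by rw [hQc]) (by
      refine le_trans ?_ hp
      calc (A * A).card * (A'.card * S.card) = A'.card * S.card * (A * A).card := by ring
        _ ≤ _ := by gcongr)
  have e3 := e1.trans e2
  rw [hQc] at e3
  set M := (A * A).card
  set a := A'.card
  set σ := S.card
  set n := A.card
  set E := EE A S
  have hE0 : 0 ≤ E := Nat.cast_nonneg _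
  have ha0 : 0 < a := by omega
  set x := Real.sqrt M with hx
  set y := Real.sqrt a with hy
  set z := Real.sqrt σ with hz
  set w := Real.sqrt n with hw
  have hx2 : (M : ℝ) = x ^ 2 := (Real.sq_sqrt (Nat.cast_nonneg _)).symm
  have hy2 : (a : ℝ) = y ^ 2 := (Real.sq_sqrt (Nat.cast_nonneg _)).symm
  have hz2 : (σ : ℝ) = z ^ 2 := (Real.sq_sqrt (Nat.cast_nonneg _)).symm
  have hw2 : (n : ℝ) = w ^ 2 := (Real.sq_sqrt (Nat.cast_nonneg _)).symm
  have hx0 : 0 ≤ x := Real.sqrt_nonneg _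
  have hz0 : 0 ≤ z := Real.sqrt_nonneg _
  have hy0 : 0 < y := Real.sqrt_pos.mpr (by exact_mod_cast ha0)
  have hw0 : 0 < w := Real.sqrt_pos.mpr (by exact_mod_cast (by omega : 0 < n))
  clear_value M a σ n E
  have hxyz : Real.sqrt ((M * (a * σ) : ℕ) : ℝ) = x * y * z := by
    push_cast
    rw [Real.sqrt_mul (Nat.cast_nonneg _), Real.sqrt_mul (Nat.cast_nonneg _)]
    ring
  rw [hxyz] at e3
  have hyx : y ^ 2 ≤ x ^ 2 := by
    rw [← hy2, ← hx2]; exact_mod_cast ha2.trans hAA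
  have hwy : w ^ 2 ≤ 2 * y ^ 2 := by
    rw [← hw2, ← hy2]; exact_mod_cast ha1
  push_cast at e3
  rw [hx2, hy2, hz2] at e3
  rw [hx2, hw2]
  rw [hz2] at hT hR
  exact energy_num hE0 hx0 hz0 hy0 hw0 hΔ hR0 hyx hwy hT hR e3

theorem final_num {T' L Sg J ℓ X1 X2 X3 : ℝ} (hX1' : 0 ≤ X1) (hX2' : 0 ≤ X2) (hX3' : 0 ≤ X3)
    (hJ0 : 0 ≤ J) (hℓ1 : 1 ≤ ℓ) (hJl : J ≤ 3 * ℓ) (hd : T' ≤ 2 * L + 8 * J * Sg) (hlow : L ≤ X1)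
    (hsum : Sg ≤ J * (100000000 * (X1 + X2 + X3))) :
    T' ≤ 10000000000 * ℓ ^ 2 * (X1 + X2 + X3) := by
  have hX : 0 ≤ X1 + X2 + X3 := by positivity
  have h8 : 8 * J * (J * (100000000 * (X1 + X2 + X3)))
      ≤ 8 * (3 * ℓ) * ((3 * ℓ) * (100000000 * (X1 + X2 + X3))) := by gcongr
  have h9 := mul_le_mul_of_nonneg_left hsum (by positivity : 0 ≤ 8 * J)
  have h10 : X1 + X2 + X3 ≤ ℓ ^ 2 * (X1 + X2 + X3) :=
    le_mul_of_one_le_left hX (one_le_pow₀ hℓ1)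
  have h11 : T' ≤ 2 * X1 + 8 * (3 * ℓ) * ((3 * ℓ) * (100000000 * (X1 + X2 + X3))) := by
    linarith
  have h12 : 8 * (3 * ℓ) * ((3 * ℓ) * (100000000 * (X1 + X2 + X3)))
    = 7200000000 * (ℓ ^ 2 * (X1 + X2 + X3)) := by ring
  rw [h12] at h11
  have h13 : 10000000000 * ℓ ^ 2 * (X1 + X2 + X3)
    = 10000000000 * (ℓ ^ 2 * (X1 + X2 + X3)) := by ring
  rw [h13]
  linarith

theorem final_aux {p : ℕ} [Fact p.Prime] (A : Finset (ZMod p)) (j : ℕ) (h2 : 2 ≤ A.card)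
    (hp : A.card * (j • A).card * (A * A).card ≤ p ^ 2) {T T' : ℝ}
    (hT : T = ∑ x, rep j A x ^ 2) (hT' : T' = ∑ x, rep (j + 1) A x ^ 2) (hTpos : 0 < T) :
    T' ≤ 10000000000 * (max 1 (Real.log A.card)) ^ 2 *
      ((A.card : ℝ) ^ j * Real.sqrt T * Real.sqrt (A * A).card ^ 3 / Real.sqrt A.card
      + ((A.card : ℝ) ^ j) ^ 2 / A.card * (A * A).card
      + T * ((A * A).card : ℝ) ^ 2 / A.card) := by
  have hAA := card_le_mul A h2
  set n := A.card with hn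
  set M := (A * A).card with hM
  have hn0 : (0 : ℝ) < n := by exact_mod_cast (by omega : 0 < n)
  set R := (n : ℝ) ^ j with hR
  have hR0 : 0 ≤ R := by positivity
  set q := Real.sqrt T with hq
  have hq0 : 0 < q := Real.sqrt_pos.mpr hTpos
  have hq2 : q ^ 2 = T := Real.sq_sqrt hTpos.le
  set τ := q / n with hτ
  have hτ0 : 0 < τ := by positivity
  set J := Nat.log 2 n + 1 with hJ
  have hr0 : ∀ x, 0 ≤ rep j A x := fun x => Nat.cast_nonneg _
  have hrq : ∀ x, rep j A x ≤ q := by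
    intro x
    refine Real.le_sqrt_of_sq_le ?_
    rw [hT]
    exact Finset.single_le_sum (f := fun x => rep j A x ^ 2) (fun _ _ => sq_nonneg _)
      (Finset.mem_univ x)
  have hnJ : (n : ℝ) < 2 ^ J := by
    exact_mod_cast Nat.lt_pow_succ_log_self (by norm_num) n
  have hlt : ∀ x, rep j A x < 2 ^ J * τ := by
    intro x
    refine (hrq x).trans_lt ?_
    have : q = n * τ := by rw [hτ]; field_simp
    rw [this]
    exact mul_lt_mul_of_pos_right hnJ hτ0
  have hd := dyadic A (rep j A) hr0 hτ0.le J hlt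
  simp only [← rep_succ] at hd
  rw [← hT', sum_rep] at hd
  set X1 := R * q * Real.sqrt M ^ 3 / Real.sqrt n with hX1
  set X2 := R ^ 2 / n * M with hX2
  set X3 := T * (M : ℝ) ^ 2 / n with hX3
  have hX1' : 0 ≤ X1 := by positivity
  have hX2' : 0 ≤ X2 := by positivity
  have hX3' : 0 ≤ X3 := by positivity
  have hlow : (n : ℝ) ^ 2 * (τ * R) ≤ X1 := by
    have e : (n : ℝ) ^ 2 * (τ * R) = R * q * n := by rw [hτ]; field_simp
    rw [e, hX1, mul_div_assoc]
    refine mul_le_mul_of_nonneg_left ?_ (by positivity)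
    have hs0 : 0 < Real.sqrt n := Real.sqrt_pos.mpr hn0
    rw [le_div_iff₀ hs0]
    have hs : Real.sqrt n ≤ Real.sqrt M := Real.sqrt_le_sqrt (by exact_mod_cast hAA)
    calc (n : ℝ) * Real.sqrt n = Real.sqrt n ^ 2 * Real.sqrt n := by
          rw [Real.sq_sqrt hn0.le]
      _ = Real.sqrt n ^ 3 := by ring
      _ ≤ _ := by gcongr
  have hE : ∀ i, (2 ^ i * τ) ^ 2 * EE A (Finset.univ.filter
      (fun x => 2 ^ i * τ ≤ rep j A x ∧ rep j A x < 2 ^ (i + 1) * τ))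
      ≤ 100000000 * (X1 + X2 + X3) := by
    intro i
    set S := Finset.univ.filter
      (fun x => 2 ^ i * τ ≤ rep j A x ∧ rep j A x < 2 ^ (i + 1) * τ) with hS
    have hΔ : 0 < 2 ^ i * τ := by positivity
    have hmem : ∀ x ∈ S, 2 ^ i * τ ≤ rep j A x := fun x hx => (Finset.mem_filter.mp hx).2.1
    have hSsub : S ⊆ j • A := fun x hx => rep_support j A x (hΔ.trans_le (hmem x hx)).ne'
    refine energy_bound A S h2 ?_ hΔ.le hR0 ?_ ?_
    · refine le_trans ?_ hp
      gcongr
    · rw [hT]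
      calc (2 ^ i * τ) ^ 2 * (S.card : ℝ) = ∑ x ∈ S, (2 ^ i * τ) ^ 2 := by
            rw [Finset.sum_const, nsmul_eq_mul]; ring
        _ ≤ ∑ x ∈ S, rep j A x ^ 2 := by
            refine Finset.sum_le_sum (fun x hx => ?_)
            exact pow_le_pow_left₀ hΔ.le (hmem x hx) 2
        _ ≤ _ := Finset.sum_le_univ_sum_of_nonneg (fun _ => sq_nonneg _)
    · rw [hR, ← sum_rep]
      calc (2 ^ i * τ) * (S.card : ℝ) = ∑ x ∈ S, (2 ^ i * τ) := by
            rw [Finset.sum_const, nsmul_eq_mul]; ring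
        _ ≤ ∑ x ∈ S, rep j A x := Finset.sum_le_sum (fun x hx => hmem x hx)
        _ ≤ _ := Finset.sum_le_univ_sum_of_nonneg hr0
  have hsum := Finset.sum_le_card_nsmul (Finset.range J) _ _ (fun i _ => hE i)
  rw [Finset.card_range, nsmul_eq_mul] at hsum
  set ℓ := max 1 (Real.log n) with hℓ
  have hℓ1 : 1 ≤ ℓ := le_max_left _ _
  have hJl : (J : ℝ) ≤ 3 * ℓ := by
    have h1 : ((Nat.log 2 n : ℕ) : ℝ) * Real.log 2 ≤ Real.log n := by
      rw [← Real.log_pow]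
      apply Real.log_le_log (by positivity)
      exact_mod_cast Nat.pow_log_le_self 2 (by omega)
    have h3 := Real.log_two_gt_d9
    have h4 : Real.log n ≤ ℓ := le_max_right _ _
    have h5 : (0 : ℝ) ≤ (Nat.log 2 n : ℕ) := Nat.cast_nonneg _
    rw [hJ]; push_cast
    nlinarith
  exact final_num hX1' hX2' hX3' (Nat.cast_nonneg _) hℓ1 hJl hd hlow hsum

end RudnevAux


theorem stmt_18 :
    ∃ C : ℝ, 0 < C ∧
      ∀ (p : ℕ), p.Prime →
        ∀ (k : ℕ), 2 ≤ k →
          ∀ (A : Finset (ZMod p)), A.Nonempty →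
            A.card * ((k - 1) • A).card * (A * A).card ≤ p ^ 2 →
            (((((Fintype.piFinset fun _ : Fin k => A) ×ˢ
                  (Fintype.piFinset fun _ : Fin k => A)).filter
                (fun q => ∑ i, q.1 i = ∑ i, q.2 i)).card : ℝ)) ≤
              C * (max 1 (Real.log A.card)) ^ C *
                ((A.card : ℝ) ^ ((k : ℝ) - 3 / 2) *
                    (((((Fintype.piFinset fun _ : Fin (k - 1) => A) ×ˢ
                          (Fintype.piFinset fun _ : Fin (k - 1) => A)).filter
                        (fun q => ∑ i, q.1 i = ∑ i, q.2 i)).card : ℝ)) ^ ((1 : ℝ) / 2) *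
                    ((A * A).card : ℝ) ^ ((3 : ℝ) / 2)
                  + (A.card : ℝ) ^ (2 * (k : ℝ) - 3) * ((A * A).card : ℝ)
                  + (((((Fintype.piFinset fun _ : Fin (k - 1) => A) ×ˢ
                          (Fintype.piFinset fun _ : Fin (k - 1) => A)).filter
                        (fun q => ∑ i, q.1 i = ∑ i, q.2 i)).card : ℝ))
                      * ((A * A).card : ℝ) ^ 2 / (A.card : ℝ)) := by
  refine ⟨10000000000, by norm_num, ?_⟩
  intro p hp k hk A hA hcard
  have : Fact p.Prime := ⟨hp⟩
  obtain ⟨j, rfl⟩ : ∃ j, k = j + 1 := ⟨k - 1, by omega⟩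
  generalize hi : j + 1 - 1 = i at hcard ⊢
  obtain rfl : j = i := by omega
  have hn1 : 1 ≤ A.card := hA.card_pos
  have hM1 : 1 ≤ (A * A).card := (hA.mul hA).card_pos
  have hpi : (Fintype.piFinset fun _ : Fin j => A).Nonempty := by
    rw [Fintype.piFinset_nonempty]; exact fun _ => hA
  have hTpos : 0 < ((((Fintype.piFinset fun _ : Fin j => A) ×ˢ
      (Fintype.piFinset fun _ : Fin j => A)).filter
      (fun q => ∑ i, q.1 i = ∑ i, q.2 i)).card : ℝ) := by
    obtain ⟨g, hg⟩ := hpi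
    have : 0 < (((Fintype.piFinset fun _ : Fin j => A) ×ˢ
      (Fintype.piFinset fun _ : Fin j => A)).filter
      (fun q => ∑ i, q.1 i = ∑ i, q.2 i)).card :=
      Finset.card_pos.mpr ⟨(g, g), by simp [Finset.mem_filter, Finset.mem_product] at hg ⊢; exact hg⟩
    exact_mod_cast this
  have hT := RudnevAux.card_pairs (Fintype.piFinset fun _ : Fin j => A) (fun g => ∑ i, g i)
  have hT' := RudnevAux.card_pairs (Fintype.piFinset fun _ : Fin (j + 1) => A) (fun g => ∑ i, g i)
  have hT'le : ((((Fintype.piFinset fun _ : Fin (j + 1) => A) ×ˢ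
      (Fintype.piFinset fun _ : Fin (j + 1) => A)).filter
      (fun q => ∑ i, q.1 i = ∑ i, q.2 i)).card : ℝ) ≤
      ((A.card ^ (j + 1) * A.card ^ (j + 1) : ℕ) : ℝ) := by
    refine Nat.cast_le.mpr ((Finset.card_filter_le _ _).trans ?_)
    rw [Finset.card_product, Fintype.card_piFinset_const]
  generalize ((((Fintype.piFinset fun _ : Fin j => A) ×ˢ
      (Fintype.piFinset fun _ : Fin j => A)).filter
      (fun q => ∑ i, q.1 i = ∑ i, q.2 i)).card : ℝ) = T at hT hTpos ⊢
  generalize ((((Fintype.piFinset fun _ : Fin (j + 1) => A) ×ˢ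
      (Fintype.piFinset fun _ : Fin (j + 1) => A)).filter
      (fun q => ∑ i, q.1 i = ∑ i, q.2 i)).card : ℝ) = T' at hT' hT'le ⊢
  have hn0 : (0 : ℝ) < A.card := by exact_mod_cast hn1
  have hM0 : (0 : ℝ) < (A * A).card := by exact_mod_cast hM1
  have hMr : (1 : ℝ) ≤ (A * A).card := by exact_mod_cast hM1
  have hl1 : 1 ≤ max 1 (Real.log A.card) := le_max_left _ _
  have e1 : (A.card : ℝ) ^ (((j + 1 : ℕ) : ℝ) - 3 / 2) = (A.card : ℝ) ^ j / Real.sqrt A.card := by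
    rw [Real.sqrt_eq_rpow, ← Real.rpow_natCast, ← Real.rpow_sub hn0]
    congr 1
    push_cast; ring
  have e2 : (A.card : ℝ) ^ (2 * ((j + 1 : ℕ) : ℝ) - 3) = ((A.card : ℝ) ^ j) ^ 2 / A.card := by
    rw [← pow_mul, ← Real.rpow_natCast]
    conv_rhs => rw [← Real.rpow_one (A.card : ℝ)]
    rw [Real.rpow_one, ← Real.rpow_sub_one hn0.ne']
    congr 1
    push_cast; ring
  have e3 : ((A * A).card : ℝ) ^ ((3 : ℝ) / 2) = Real.sqrt (A * A).card ^ 3 := by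
    rw [Real.sqrt_eq_rpow, ← Real.rpow_natCast, ← Real.rpow_mul hM0.le]
    congr 1
    norm_num
  have e4 : T ^ ((1 : ℝ) / 2) = Real.sqrt T := (Real.sqrt_eq_rpow T).symm
  rw [e1, e2, e3, e4]
  set Y := (A.card : ℝ) ^ j / Real.sqrt A.card * Real.sqrt T * Real.sqrt (A * A).card ^ 3
    + ((A.card : ℝ) ^ j) ^ 2 / A.card * (A * A).card + T * ((A * A).card : ℝ) ^ 2 / A.card with hY
  have hY0 : 0 ≤ Y := by
    rw [hY]
    have := hTpos.le
    positivity
  have hlpow : max 1 (Real.log A.card) ^ 2 ≤ max 1 (Real.log A.card) ^ (10000000000 : ℝ) := by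
    rw [← Real.rpow_two]
    exact Real.rpow_le_rpow_of_exponent_le hl1 (by norm_num)
  have hstep : 10000000000 * max 1 (Real.log A.card) ^ 2 * Y
      ≤ 10000000000 * max 1 (Real.log A.card) ^ (10000000000 : ℝ) * Y :=
    mul_le_mul_of_nonneg_right (mul_le_mul_of_nonneg_left hlpow (by norm_num)) hY0
  refine le_trans ?_ hstep
  by_cases h2 : 2 ≤ A.card
  · have := RudnevAux.final_aux A j h2 hcard hT hT' hTpos
    refine this.trans (le_of_eq ?_)
    rw [hY]
    ring
  · have hA1 : A.card = 1 := by omega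
    rw [hA1] at hT'le
    have h1 : T' ≤ 1 := by simpa using hT'le
    have h3 : 1 ≤ Y := by
      rw [hY, hA1]
      have h4 : 0 ≤ ((1 : ℕ) : ℝ) ^ j / Real.sqrt ((1 : ℕ) : ℝ) * Real.sqrt T
        * Real.sqrt (A * A).card ^ 3 := by positivity
      have h5 : 0 ≤ T * ((A * A).card : ℝ) ^ 2 / ((1 : ℕ) : ℝ) := by
        have := hTpos.le
        positivity
      have h6 : (((1 : ℕ) : ℝ) ^ j) ^ 2 / ((1 : ℕ) : ℝ) * (A * A).card = (A * A).card := by simp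
      linarith
    have h7 : 1 ≤ max 1 (Real.log A.card) ^ 2 := one_le_pow₀ hl1
    nlinarith
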